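/- arXiv:1509.02141 — 7 statements merged into one kernel-verified Lean document; each statement's English description precedes it below -/
import Mathlib

section
/- Let s be a nonnegative integer, p ∈ (1,∞) and α > 0 be such that α + 1/p < s + 1. Let μ be a positive Borel measure on 𝔻 with ∫_𝔻 (1−|ζ|)^{s+1} dμ(ζ) < ∞ and let u be the canonical integral u(z) = ∫_𝔻 log|E(A(z,ζ),s)| dμ(ζ). If n(r,u) := μ(closed disc of radius r centered at 0) = O((1−r)^{−α−1/p}) as r ↑ 1, then m_p(r,u) = O((1−r)^{−α}) as r ↑ 1. -/
open MeasureTheory Complex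

/-- The `p`-th integral mean `m_p(r,u) = ((1/2π) ∫₀^{2π} |u(re^{iθ})|^p dθ)^{1/p}`. -/
noncomputable def mpMean (p r : ℝ) (u : ℂ → ℝ) : ℝ :=
  ((1 / (2 * Real.pi)) *
      ∫ θ in (0 : ℝ)..(2 * Real.pi),
        |u ((r : ℂ) * Complex.exp (θ * Complex.I))| ^ p) ^ (1 / p)

/-- The Weierstrass primary factor `E(w,s) = (1-w)·exp(w + w²/2 + ⋯ + w^s/s)`. -/
noncomputable def weierE (w : ℂ) (s : ℕ) : ℂ :=
  (1 - w) * Complex.exp (∑ j ∈ Finset.range s, w ^ (j + 1) / (j + 1))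

/-- `A(z,ζ) = (1-|ζ|²)/(1 - z·conj ζ)`. -/
noncomputable def Acayley (z ζ : ℂ) : ℂ :=
  ((1 : ℂ) - (‖ζ‖ : ℂ) ^ 2) / (1 - z * (starRingEnd ℂ) ζ)

lemma mink_aux {X Y : Type*} [MeasurableSpace X] [MeasurableSpace Y] (μ : Measure X) (ν : Measure Y)
    [SFinite μ] [SFinite ν] {p : ℝ} (hp : 1 < p) (f : X → Y → ENNReal)
    (hf : Measurable (Function.uncurry f)) (G : Y → ENNReal) (hG : Measurable G)
    (h0 : ∀ᵐ y ∂ν, G y ≠ 0) (ht : ∀ᵐ y ∂ν, G y ≠ ⊤)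
    (hb : ∀ᵐ y ∂ν, ∫⁻ x, f x y ^ p ∂μ ≤ G y ^ p) :
    ∫⁻ x, (∫⁻ y, f x y ∂ν) ^ p ∂μ ≤ (∫⁻ y, G y ∂ν) ^ p := by
  have hp0 : 0 < p := by linarith
  have hpq : p.HolderConjugate p.conjExponent := Real.HolderConjugate.conjExponent hp
  set q := p.conjExponent with hq
  have hq0 : 0 < q := hpq.symm.pos
  have hqp : 1 / q * p = p - 1 := by
    rw [hq, Real.conjExponent]; field_simp
  have hfx : ∀ x, Measurable (f x) := fun x => hf.comp measurable_prodMk_left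
  have hx : ∀ x, (∫⁻ y, f x y ∂ν) ^ p ≤
      (∫⁻ y, f x y ^ p * G y ^ (1 - p) ∂ν) * (∫⁻ y, G y ∂ν) ^ (p - 1) := by
    intro x
    have e1 : ∫⁻ y, f x y ∂ν =
        ∫⁻ y, ((fun y => f x y * G y ^ (-(1 / q))) * (fun y => G y ^ (1 / q))) y ∂ν := by
      apply lintegral_congr_ae
      filter_upwards [h0, ht] with y h1 h2
      simp only [Pi.mul_apply]
      rw [mul_assoc, ← ENNReal.rpow_add _ _ h1 h2]
      simp
    have e2 := ENNReal.lintegral_mul_le_Lp_mul_Lq ν hpq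
      (f := fun y => f x y * G y ^ (-(1 / q))) (g := fun y => G y ^ (1 / q))
      ((hfx x).mul (hG.pow_const _)).aemeasurable (hG.pow_const _).aemeasurable
    rw [← e1] at e2
    have e3 : ∀ y, (f x y * G y ^ (-(1 / q))) ^ p = f x y ^ p * G y ^ (1 - p) := by
      intro y
      rw [ENNReal.mul_rpow_of_nonneg _ _ hp0.le, ← ENNReal.rpow_mul, neg_mul, hqp, neg_sub]
    have e4 : ∀ y, (G y ^ (1 / q)) ^ q = G y := by
      intro y
      rw [← ENNReal.rpow_mul, one_div, inv_mul_cancel₀ hq0.ne', ENNReal.rpow_one]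
    simp only [e3, e4] at e2
    calc _ ≤ _ := ENNReal.rpow_le_rpow e2 hp0.le
      _ = _ := by
        rw [ENNReal.mul_rpow_of_nonneg _ _ hp0.le, ← ENNReal.rpow_mul, ← ENNReal.rpow_mul, hqp,
          one_div, inv_mul_cancel₀ hp0.ne', ENNReal.rpow_one]
  have hm : Measurable (Function.uncurry fun x y => f x y ^ p * G y ^ (1 - p)) :=
    (hf.pow_const p).mul ((hG.comp measurable_snd).pow_const _)
  calc ∫⁻ x, (∫⁻ y, f x y ∂ν) ^ p ∂μ
      ≤ ∫⁻ x, (∫⁻ y, f x y ^ p * G y ^ (1 - p) ∂ν) * (∫⁻ y, G y ∂ν) ^ (p - 1) ∂μ :=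
        lintegral_mono hx
    _ = (∫⁻ x, (∫⁻ y, f x y ^ p * G y ^ (1 - p) ∂ν) ∂μ) * (∫⁻ y, G y ∂ν) ^ (p - 1) := by
        rw [lintegral_mul_const]
        exact hm.lintegral_prod_right
    _ = (∫⁻ y, (∫⁻ x, f x y ^ p * G y ^ (1 - p) ∂μ) ∂ν) * (∫⁻ y, G y ∂ν) ^ (p - 1) := by
        rw [lintegral_lintegral_swap hm.aemeasurable]
    _ ≤ (∫⁻ y, G y ∂ν) * (∫⁻ y, G y ∂ν) ^ (p - 1) := by
        gcongr ?_ * _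
        apply lintegral_mono_ae
        filter_upwards [h0, ht, hb] with y h1 h2 h3
        rw [lintegral_mul_const]
        · calc _ ≤ G y ^ p * G y ^ (1 - p) := by gcongr
            _ = G y := by rw [← ENNReal.rpow_add _ _ h1 h2]; simp
        · exact (hf.comp measurable_prodMk_right).pow_const p
    _ = _ := by
        conv_lhs => rw [← ENNReal.rpow_one (∫⁻ y, G y ∂ν), ← ENNReal.rpow_mul, one_mul,
          ← ENNReal.rpow_add_of_nonneg _ _ zero_le_one (by linarith)]
        congr 1; ring

lemma geo_aux {X : Type*} [MeasurableSpace X] (μ : Measure X) (S : Set X) (T : ℕ → Set X)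
    (hT : ∀ k, MeasurableSet (T k)) (hS : S ⊆ ⋃ k, T k) (g : X → ℝ) (a b : ℕ → ℝ)
    (ha0 : ∀ k, 0 ≤ a k) (ha : ∀ k, ∀ x ∈ T k, g x ≤ a k)
    (hb : ∀ k, μ (T k) ≤ ENNReal.ofReal (b k)) (B q : ℝ) (hB : 0 ≤ B) (hq : 0 ≤ q) (hq1 : q < 1)
    (hab : ∀ k, a k * b k ≤ B * q ^ k) :
    ∫⁻ x in S, ENNReal.ofReal (g x) ∂μ ≤ ENNReal.ofReal (B / (1 - q)) := by
  have hsum : Summable fun k : ℕ => B * q ^ k := (summable_geometric_of_lt_one hq hq1).mul_left B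
  calc ∫⁻ x in S, ENNReal.ofReal (g x) ∂μ ≤ ∫⁻ x in ⋃ k, T k, ENNReal.ofReal (g x) ∂μ :=
        lintegral_mono_set hS
    _ ≤ ∑' k, ∫⁻ x in T k, ENNReal.ofReal (g x) ∂μ := lintegral_iUnion_le _ _
    _ ≤ ∑' k, ENNReal.ofReal (B * q ^ k) := by
        apply ENNReal.tsum_le_tsum
        intro k
        calc _ ≤ ∫⁻ x in T k, ENNReal.ofReal (a k) ∂μ :=
              setLIntegral_mono' (hT k) fun x hx => ENNReal.ofReal_le_ofReal (ha k x hx)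
          _ = ENNReal.ofReal (a k) * μ (T k) := by simp
          _ ≤ ENNReal.ofReal (a k) * ENNReal.ofReal (b k) := by gcongr; exact hb k
          _ = ENNReal.ofReal (a k * b k) := (ENNReal.ofReal_mul (ha0 k)).symm
          _ ≤ _ := ENNReal.ofReal_le_ofReal (hab k)
    _ = ENNReal.ofReal (∑' k, B * q ^ k) :=
        (ENNReal.ofReal_tsum_of_nonneg (fun k => by positivity) hsum).symm
    _ = _ := by rw [tsum_mul_left, tsum_geometric_of_lt_one hq hq1, div_eq_mul_inv]

lemma hint_aux {M : ℝ} (hM : 1 < M) : ∃ C : ℝ, 0 ≤ C ∧ ∀ η : ℝ, 0 < η →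
    ∫⁻ t : ℝ, ENNReal.ofReal ((η + |t|) ^ (1 / 2 - M) * |t| ^ (-(1 / 2) : ℝ)) ≤
      ENNReal.ofReal (C * η ^ (1 - M)) := by
  have hM1 : 0 < M - 1 := by linarith
  refine ⟨2 * (2 + 1 / (M - 1)), by positivity, fun η hη => ?_⟩
  set F : ℝ → ENNReal :=
    fun t => ENNReal.ofReal ((η + |t|) ^ (1 / 2 - M) * |t| ^ (-(1 / 2) : ℝ)) with hF
  have hI1 : ∫⁻ t in Set.Ioc 0 η, F t ≤ ENNReal.ofReal (2 * η ^ (1 - M)) := by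
    have i1 : IntegrableOn (fun t : ℝ => η ^ (1 / 2 - M) * t ^ (-(1 / 2) : ℝ)) (Set.Ioc 0 η) := by
      have := (intervalIntegral.intervalIntegrable_rpow' (a := 0) (b := η)
        (r := (-(1 / 2) : ℝ)) (by norm_num)).const_mul (η ^ (1 / 2 - M))
      rwa [intervalIntegrable_iff_integrableOn_Ioc_of_le hη.le] at this
    calc _ ≤ ∫⁻ t in Set.Ioc 0 η, ENNReal.ofReal (η ^ (1 / 2 - M) * t ^ (-(1 / 2) : ℝ)) := by
          apply setLIntegral_mono' measurableSet_Ioc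
          intro t ht
          apply ENNReal.ofReal_le_ofReal
          rw [abs_of_pos ht.1]
          have : (η + t) ^ (1 / 2 - M) ≤ η ^ (1 / 2 - M) :=
            Real.rpow_le_rpow_of_nonpos hη (by linarith [ht.1]) (by linarith)
          have h2 : 0 ≤ t ^ (-(1 / 2) : ℝ) := Real.rpow_nonneg ht.1.le _
          gcongr
      _ = ENNReal.ofReal (∫ t in Set.Ioc 0 η, η ^ (1 / 2 - M) * t ^ (-(1 / 2) : ℝ)) := by
          rw [ofReal_integral_eq_lintegral_ofReal i1]
          filter_upwards [ae_restrict_mem measurableSet_Ioc] with t ht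
          have := ht.1
          simp only [Pi.zero_apply]
          positivity
      _ = _ := by
          congr 1
          rw [← intervalIntegral.integral_of_le hη.le, intervalIntegral.integral_const_mul,
            integral_rpow (Or.inl (by norm_num))]
          have h1 : (-(1 / 2) + 1 : ℝ) = 1 / 2 := by norm_num
          rw [h1, Real.zero_rpow (by norm_num), sub_zero, mul_div_assoc', ← Real.rpow_add hη]
          have h2 : (1 / 2 - M + 1 / 2) = 1 - M := by ring
          rw [h2]; ring
  have hI2 : ∫⁻ t in Set.Ioi η, F t ≤ ENNReal.ofReal (1 / (M - 1) * η ^ (1 - M)) := by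
    calc _ ≤ ∫⁻ t in Set.Ioi η, ENNReal.ofReal (t ^ (-M)) := by
          apply setLIntegral_mono' measurableSet_Ioi
          intro t ht
          have ht' : η < t := ht
          have ht0 : 0 < t := hη.trans ht'
          apply ENNReal.ofReal_le_ofReal
          rw [abs_of_pos ht0]
          have h1 : (η + t) ^ (1 / 2 - M) ≤ t ^ (1 / 2 - M) :=
            Real.rpow_le_rpow_of_nonpos ht0 (by linarith) (by linarith)
          calc _ ≤ t ^ (1 / 2 - M) * t ^ (-(1 / 2) : ℝ) := by gcongr
            _ = _ := by rw [← Real.rpow_add ht0]; congr 1; ring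
      _ = ENNReal.ofReal (∫ t in Set.Ioi η, t ^ (-M)) := by
          rw [ofReal_integral_eq_lintegral_ofReal (integrableOn_Ioi_rpow_of_lt (by linarith) hη)]
          filter_upwards [ae_restrict_mem measurableSet_Ioi] with t ht
          have ht' : η < t := ht
          have ht0 : 0 < t := hη.trans ht'
          simp only [Pi.zero_apply]
          positivity
      _ = _ := by
          congr 1
          rw [integral_Ioi_rpow_of_lt (by linarith) hη]
          have h2 : -M + 1 = -(M - 1) := by ring
          rw [h2, neg_div_neg_eq]
          have h3 : -(M - 1) = 1 - M := by ring
          rw [h3]; ring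
  have hI : ∫⁻ t in Set.Ioi 0, F t ≤ ENNReal.ofReal ((2 + 1 / (M - 1)) * η ^ (1 - M)) := by
    rw [← Set.Ioc_union_Ioi_eq_Ioi hη.le]
    refine (lintegral_union_le _ _ _).trans ?_
    rw [add_mul, ENNReal.ofReal_add (by positivity) (by positivity)]
    exact add_le_add hI1 hI2
  have hneg : ∫⁻ t in Set.Iio 0, F t = ∫⁻ t in Set.Ioi 0, F t := by
    have h1 := (Measure.measurePreserving_neg (volume : Measure ℝ)).setLIntegral_comp_emb
      (MeasurableEquiv.neg ℝ).measurableEmbedding F (Set.Iio 0)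
    have h2 : ∀ t, F (-t) = F t := fun t => by simp [hF]
    simp only [Set.image_neg_eq_neg, Set.neg_Iio, neg_zero] at h1
    rw [← h1]
    simp only [h2]
  have huniv : ∫⁻ t, F t ≤ (∫⁻ t in Set.Iio 0, F t) + ∫⁻ t in Set.Ioi 0, F t := by
    refine le_trans (le_of_eq ?_) (lintegral_union_le _ _ _)
    rw [Set.Iio_union_Ioi, restrict_compl_singleton]
  refine huniv.trans ?_
  rw [hneg, mul_assoc, two_mul, ENNReal.ofReal_add (by positivity) (by positivity)]
  exact add_le_add hI hI

lemma K_small (s : ℕ) (A : ℂ) (hA : ‖A‖ ≤ 1 / 2) :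
    |Real.log ‖weierE A s‖| ≤ 2 * ‖A‖ ^ (s + 1) := by
  have hA1 : ‖-A‖ < 1 := by rw [norm_neg]; linarith
  have hne : 1 - A ≠ 0 := by
    intro h
    have : A = 1 := by linear_combination -h
    rw [this] at hA; norm_num at hA
  have h1 := Complex.norm_log_sub_logTaylor_le s hA1
  have h2 : Complex.logTaylor (s + 1) (-A) = -∑ j ∈ Finset.range s, A ^ (j + 1) / ((j : ℂ) + 1) := by
    rw [Complex.logTaylor, Finset.sum_range_succ', ← Finset.sum_neg_distrib]
    simp only [Nat.cast_zero, div_zero, add_zero]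
    apply Finset.sum_congr rfl
    intro j _
    rw [neg_pow A (j + 1)]
    push_cast
    have : (-1 : ℂ) ^ (j + 1 + 1) * ((-1) ^ (j + 1) * A ^ (j + 1)) = - A ^ (j + 1) := by
      have : (-1 : ℂ) ^ (j + 1) * (-1) ^ (j + 1) = 1 := by
        rw [← mul_pow]; simp
      rw [pow_succ (-1 : ℂ) (j + 1)]
      linear_combination (-A ^ (j + 1)) * this
    rw [this]; ring
  have h3 : Real.log ‖weierE A s‖ =
      (Complex.log (1 + -A) - Complex.logTaylor (s + 1) (-A)).re := by
    rw [h2, weierE, norm_mul, Complex.norm_exp, Real.log_mul (norm_ne_zero_iff.2 hne)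
      (Real.exp_pos _).ne', Real.log_exp, Complex.sub_re, Complex.log_re, Complex.neg_re,
      ← sub_eq_add_neg]
    ring
  rw [h3]
  refine (Complex.abs_re_le_norm _).trans (h1.trans ?_)
  rw [norm_neg, div_le_iff₀ (by positivity)]
  have h4 : (1 - ‖A‖)⁻¹ ≤ 2 := by
    rw [inv_le_comm₀ (by linarith) (by norm_num)]; linarith
  have h5 : 0 ≤ ‖A‖ ^ (s + 1) := by positivity
  have h6 : (0 : ℝ) ≤ s := by positivity
  nlinarith [mul_le_mul_of_nonneg_left h4 h5, mul_nonneg h5 h6]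

lemma K_big (s : ℕ) (A : ℂ) (hA : ‖A‖ ≤ 2) (hA1 : 1 - A ≠ 0) :
    |Real.log ‖weierE A s‖ - Real.log ‖1 - A‖| ≤ ∑ j ∈ Finset.range s, (2 : ℝ) ^ (j + 1) := by
  rw [weierE, norm_mul, Complex.norm_exp, Real.log_mul (norm_ne_zero_iff.2 hA1)
      (Real.exp_pos _).ne', Real.log_exp, add_sub_cancel_left]
  refine (Complex.abs_re_le_norm _).trans ((norm_sum_le _ _).trans ?_)
  apply Finset.sum_le_sum
  intro j _
  rw [norm_div, norm_pow]
  have h1 : (1 : ℝ) ≤ ‖(j : ℂ) + 1‖ := by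
    have : ((j : ℂ) + 1) = ((j + 1 : ℕ) : ℂ) := by push_cast; ring
    rw [this, Complex.norm_natCast]; push_cast; linarith [(Nat.cast_nonneg j : (0 : ℝ) ≤ j)]
  calc _ ≤ ‖A‖ ^ (j + 1) := div_le_self (by positivity) h1
    _ ≤ _ := by gcongr

lemma D_lower (z ζ : ℂ) : 1 - ‖z‖ * ‖ζ‖ ≤ ‖1 - z * (starRingEnd ℂ) ζ‖ := by
  have := norm_sub_norm_le (1 : ℂ) (z * (starRingEnd ℂ) ζ)
  simpa using this

lemma D_pos {z ζ : ℂ} (hz : ‖z‖ < 1) (hζ : ‖ζ‖ < 1) : 0 < ‖1 - z * (starRingEnd ℂ) ζ‖ := by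
  have := D_lower z ζ
  nlinarith [norm_nonneg z, norm_nonneg ζ]

lemma A_norm {z ζ : ℂ} (hζ : ‖ζ‖ < 1) :
    ‖Acayley z ζ‖ = (1 - ‖ζ‖ ^ 2) / ‖1 - z * (starRingEnd ℂ) ζ‖ := by
  rw [Acayley, norm_div]
  congr 1
  have : ((1 : ℂ) - (‖ζ‖ : ℂ) ^ 2) = ((1 - ‖ζ‖ ^ 2 : ℝ) : ℂ) := by push_cast; ring
  rw [this, Complex.norm_real, Real.norm_eq_abs, abs_of_nonneg]
  nlinarith [norm_nonneg ζ]

lemma A_le_two {z ζ : ℂ} (hz : ‖z‖ < 1) (hζ : ‖ζ‖ < 1) : ‖Acayley z ζ‖ ≤ 2 := by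
  rw [A_norm hζ, div_le_iff₀ (D_pos hz hζ)]
  have := D_lower z ζ
  nlinarith [norm_nonneg z, norm_nonneg ζ, mul_nonneg (norm_nonneg ζ) (sub_nonneg.2 hz.le)]

lemma one_sub_A {z ζ : ℂ} (hz : ‖z‖ < 1) (hζ : ‖ζ‖ < 1) :
    1 - Acayley z ζ = (starRingEnd ℂ) ζ * (ζ - z) / (1 - z * (starRingEnd ℂ) ζ) := by
  have hD : 1 - z * (starRingEnd ℂ) ζ ≠ 0 := norm_pos_iff.1 (D_pos hz hζ)
  have h : (starRingEnd ℂ) ζ * ζ = (‖ζ‖ : ℂ) ^ 2 := Complex.conj_mul' ζ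
  rw [Acayley, eq_div_iff hD, sub_mul, div_mul_cancel₀ _ hD]
  linear_combination -h

lemma one_sub_A_norm {z ζ : ℂ} (hz : ‖z‖ < 1) (hζ : ‖ζ‖ < 1) :
    ‖1 - Acayley z ζ‖ = ‖ζ‖ * (‖z - ζ‖ / ‖1 - z * (starRingEnd ℂ) ζ‖) := by
  rw [one_sub_A hz hζ, norm_div, norm_mul, RCLike.norm_conj, norm_sub_rev]
  ring

lemma phi_le {z ζ : ℂ} (hz : ‖z‖ < 1) (hζ : ‖ζ‖ < 1) :
    ‖z - ζ‖ / ‖1 - z * (starRingEnd ℂ) ζ‖ ≤ 1 := by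
  rw [div_le_one (D_pos hz hζ)]
  apply (sq_le_sq₀ (norm_nonneg _) (norm_nonneg _)).1
  have e : ‖1 - z * (starRingEnd ℂ) ζ‖ ^ 2 - ‖z - ζ‖ ^ 2 = (1 - ‖z‖ ^ 2) * (1 - ‖ζ‖ ^ 2) := by
    simp only [← Complex.normSq_eq_norm_sq, Complex.normSq_apply, Complex.sub_re, Complex.sub_im,
      Complex.mul_re, Complex.mul_im, Complex.conj_re, Complex.conj_im, Complex.one_re,
      Complex.one_im]
    ring
  have h1 : 0 ≤ (1 - ‖z‖ ^ 2) * (1 - ‖ζ‖ ^ 2) := by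
    apply mul_nonneg <;> nlinarith [norm_nonneg z, norm_nonneg ζ]
  linarith

lemma K_main (s : ℕ) {ε : ℝ} (hε : 0 < ε) : ∃ C : ℝ, 0 < C ∧ ∀ z ζ : ℂ, ‖z‖ < 1 → 1 / 2 ≤ ‖ζ‖ →
    ‖ζ‖ < 1 → |Real.log ‖weierE (Acayley z ζ) s‖| ≤
      C * (‖Acayley z ζ‖ ^ (s + 1) * (‖z - ζ‖ / ‖1 - z * (starRingEnd ℂ) ζ‖) ^ (-ε)) := by
  set Cs : ℝ := ∑ j ∈ Finset.range s, (2 : ℝ) ^ (j + 1) with hCs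
  have hCs0 : 0 ≤ Cs := by positivity
  refine ⟨2 + (Cs + 1 + 1 / ε) * 2 ^ (s + 1), by positivity, fun z ζ hz hζ' hζ => ?_⟩
  set φ := ‖z - ζ‖ / ‖1 - z * (starRingEnd ℂ) ζ‖ with hφ
  have hφ0 : 0 ≤ φ := by positivity
  have hφ1 : φ ≤ 1 := phi_le hz hζ
  have hA2 := A_le_two hz hζ
  have hnA := one_sub_A_norm hz hζ
  set A := Acayley z ζ with hA
  rcases hφ0.eq_or_lt with h0 | hpos
  · rw [← hφ, ← h0, mul_zero, norm_eq_zero] at hnA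
    rw [weierE, hnA]
    simp only [zero_mul, norm_zero, Real.log_zero, abs_zero]
    positivity
  have hφε : 1 ≤ φ ^ (-ε) := Real.one_le_rpow_of_pos_of_le_one_of_nonpos hpos hφ1 (by linarith)
  rcases le_or_gt ‖A‖ (1 / 2) with hs | hb
  · calc _ ≤ 2 * ‖A‖ ^ (s + 1) := K_small s A hs
      _ ≤ (2 + (Cs + 1 + 1 / ε) * 2 ^ (s + 1)) * (‖A‖ ^ (s + 1) * φ ^ (-ε)) := by
        have h1 : (2 : ℝ) ≤ (2 + (Cs + 1 + 1 / ε) * 2 ^ (s + 1)) := by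
          have : 0 ≤ (Cs + 1 + 1 / ε) * 2 ^ (s + 1) := by positivity
          linarith
        have h2 : ‖A‖ ^ (s + 1) ≤ ‖A‖ ^ (s + 1) * φ ^ (-ε) :=
          le_mul_of_one_le_right (by positivity) hφε
        gcongr
  · have hne : 1 - A ≠ 0 := by
      rw [← norm_pos_iff, hnA]; positivity
    have h1 := K_big s A hA2 hne
    rw [hnA, ← hφ, Real.log_mul (by linarith) hpos.ne'] at h1
    have h2 : |Real.log ‖ζ‖| ≤ 1 := by
      rw [abs_of_nonpos (Real.log_nonpos (norm_nonneg _) hζ.le)]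
      have := Real.one_sub_inv_le_log_of_pos (x := ‖ζ‖) (by linarith)
      have h3 : ‖ζ‖⁻¹ ≤ 2 := by
        rw [inv_le_comm₀ (by linarith) (by norm_num)]; linarith
      linarith
    have h3 : |Real.log φ| ≤ φ ^ (-ε) / ε := by
      rw [abs_of_nonpos (Real.log_nonpos hφ0 hφ1), ← Real.log_inv, Real.rpow_neg hφ0,
        ← Real.inv_rpow hφ0]
      exact Real.log_le_rpow_div (by positivity) hε
    have h4 : |Real.log ‖weierE A s‖| ≤ Cs + 1 + φ ^ (-ε) / ε := by
      have e : Real.log ‖weierE A s‖ = (Real.log ‖weierE A s‖ - (Real.log ‖ζ‖ + Real.log φ))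
        + Real.log ‖ζ‖ + Real.log φ := by ring
      rw [e]
      refine (abs_add_three _ _ _).trans ?_
      linarith
    have h5 : (1 : ℝ) ≤ 2 ^ (s + 1) * ‖A‖ ^ (s + 1) := by
      rw [← mul_pow]
      exact one_le_pow₀ (by linarith)
    have h6 : Cs + 1 + φ ^ (-ε) / ε ≤ (Cs + 1 + 1 / ε) * φ ^ (-ε) := by
      have : (Cs + 1) ≤ (Cs + 1) * φ ^ (-ε) := le_mul_of_one_le_right (by positivity) hφε
      have e : φ ^ (-ε) / ε = 1 / ε * φ ^ (-ε) := by ring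
      rw [e]; linarith
    have h7 : (Cs + 1 + 1 / ε) * φ ^ (-ε) ≤
        (Cs + 1 + 1 / ε) * φ ^ (-ε) * (2 ^ (s + 1) * ‖A‖ ^ (s + 1)) :=
      le_mul_of_one_le_right (by positivity) h5
    have h8 : 0 ≤ 2 * (‖A‖ ^ (s + 1) * φ ^ (-ε)) := by positivity
    calc _ ≤ _ := h4
      _ ≤ _ := h6
      _ ≤ _ := h7
      _ ≤ _ := by linarith

lemma K_near (s : ℕ) : ∃ C : ℝ, 0 ≤ C ∧ ∀ z ζ : ℂ, 3 / 4 ≤ ‖z‖ → ‖z‖ < 1 → ‖ζ‖ < 1 / 2 →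
    |Real.log ‖weierE (Acayley z ζ) s‖ - Real.log ‖ζ‖| ≤ C := by
  set Cs : ℝ := ∑ j ∈ Finset.range s, (2 : ℝ) ^ (j + 1) with hCs
  have hCs0 : 0 ≤ Cs := by positivity
  refine ⟨Cs + 7, by positivity, fun z ζ hz' hz hζ' => ?_⟩
  have hζ : ‖ζ‖ < 1 := by linarith
  have hA2 := A_le_two hz hζ
  have hnA := one_sub_A_norm hz hζ
  have hφ1 := phi_le hz hζ
  have hD := D_pos hz hζ
  set φ := ‖z - ζ‖ / ‖1 - z * (starRingEnd ℂ) ζ‖ with hφ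
  set A := Acayley z ζ with hA
  rcases (norm_nonneg ζ).eq_or_lt with h0 | hpos
  · rw [← h0, zero_mul, norm_eq_zero] at hnA
    rw [weierE, hnA, ← h0]
    simp only [zero_mul, norm_zero, Real.log_zero, sub_zero, abs_zero]
    positivity
  have hφ8 : 1 / 8 ≤ φ := by
    rw [hφ, le_div_iff₀ hD]
    have h1 : ‖1 - z * (starRingEnd ℂ) ζ‖ ≤ 1 + ‖z‖ * ‖ζ‖ := by
      have := norm_sub_le (1 : ℂ) (z * (starRingEnd ℂ) ζ)
      simpa using this
    have h2 := norm_sub_norm_le z ζ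
    nlinarith
  have hne : 1 - A ≠ 0 := by
    rw [← norm_pos_iff, hnA]; positivity
  have h1 := K_big s A hA2 hne
  rw [hnA, Real.log_mul hpos.ne' (by linarith)] at h1
  have h3 : |Real.log φ| ≤ 7 := by
    rw [abs_of_nonpos (Real.log_nonpos (by linarith) hφ1)]
    have := Real.one_sub_inv_le_log_of_pos (x := φ) (by linarith)
    have h3 : φ⁻¹ ≤ 8 := by
      rw [inv_le_comm₀ (by linarith) (by norm_num)]; linarith
    linarith
  have e : Real.log ‖weierE A s‖ - Real.log ‖ζ‖ =
    (Real.log ‖weierE A s‖ - (Real.log ‖ζ‖ + Real.log φ)) + Real.log φ := by ring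
  rw [e]
  exact (abs_add_le _ _).trans (by linarith)

lemma sin_lower {t : ℝ} (h1 : -Real.pi ≤ t) (h2 : t ≤ 3 * Real.pi) :
    min |t| |t - 2 * Real.pi| / Real.pi ≤ |Real.sin (t / 2)| := by
  have hpi := Real.pi_pos
  rcases le_or_gt t Real.pi with h | h
  · have h3 : |t / 2| ≤ Real.pi / 2 := by rw [abs_le]; constructor <;> linarith
    have h4 := Real.mul_abs_le_abs_sin h3
    refine le_trans ?_ h4
    rw [abs_div, abs_two]
    have : 2 / Real.pi * (|t| / 2) = |t| / Real.pi := by field_simp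
    rw [this]
    gcongr
    exact min_le_left _ _
  · have h3 : |(t - 2 * Real.pi) / 2| ≤ Real.pi / 2 := by rw [abs_le]; constructor <;> linarith
    have h4 := Real.mul_abs_le_abs_sin h3
    have h5 : Real.sin ((t - 2 * Real.pi) / 2) = -Real.sin (t / 2) := by
      rw [← Real.sin_sub_pi]; congr 1; ring
    rw [h5, abs_neg] at h4
    refine le_trans ?_ h4
    rw [abs_div, abs_two]
    have : 2 / Real.pi * (|t - 2 * Real.pi| / 2) = |t - 2 * Real.pi| / Real.pi := by field_simp
    rw [this]
    gcongr
    exact min_le_right _ _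

lemma dist_lower {r θ : ℝ} {ζ : ℂ} (hr : 1 / 2 ≤ r) (hζ : 1 / 2 ≤ ‖ζ‖) :
    |Real.sin ((θ - ζ.arg) / 2)| ≤ ‖(r : ℂ) * Complex.exp (θ * Complex.I) - ζ‖ ∧
    |Real.sin ((θ - ζ.arg) / 2)| ≤
      ‖1 - (r : ℂ) * Complex.exp (θ * Complex.I) * (starRingEnd ℂ) ζ‖ := by
  have hre : ζ.re = ‖ζ‖ * Real.cos ζ.arg := (Complex.norm_mul_cos_arg ζ).symm
  have him : ζ.im = ‖ζ‖ * Real.sin ζ.arg := (Complex.norm_mul_sin_arg ζ).symm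
  set ρ := ‖ζ‖
  set a := ζ.arg
  have hc : Real.cos (θ - a) = 1 - 2 * Real.sin ((θ - a) / 2) ^ 2 := by
    rw [← Real.cos_sq_add_sin_sq ((θ - a) / 2)]
    have := Real.cos_two_mul ((θ - a) / 2)
    rw [mul_div_cancel₀ _ (two_ne_zero)] at this
    rw [this, Real.cos_sq']; ring
  rw [Real.cos_sub] at hc
  have s1 := Real.sin_sq_add_cos_sq θ
  have s2 := Real.sin_sq_add_cos_sq a
  have hrρ : 1 / 4 ≤ r * ρ := by nlinarith
  set S := Real.sin ((θ - a) / 2)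
  have hS : 0 ≤ S ^ 2 := sq_nonneg S
  constructor
  · refine abs_le_of_sq_le_sq ?_ (norm_nonneg _)
    have e : ‖(r : ℂ) * Complex.exp (θ * Complex.I) - ζ‖ ^ 2 = (r - ρ) ^ 2 + 4 * (r * ρ) * S ^ 2 := by
      rw [← Complex.normSq_eq_norm_sq, Complex.normSq_apply]
      simp only [Complex.sub_re, Complex.sub_im, Complex.re_ofReal_mul, Complex.im_ofReal_mul,
        Complex.exp_ofReal_mul_I_re, Complex.exp_ofReal_mul_I_im, hre, him]
      linear_combination r ^ 2 * s1 + ρ ^ 2 * s2 - 2 * r * ρ * hc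
    rw [e]
    nlinarith [sq_nonneg (r - ρ)]
  · refine abs_le_of_sq_le_sq ?_ (norm_nonneg _)
    have e : ‖1 - (r : ℂ) * Complex.exp (θ * Complex.I) * (starRingEnd ℂ) ζ‖ ^ 2 =
        (1 - r * ρ) ^ 2 + 4 * (r * ρ) * S ^ 2 := by
      rw [← Complex.normSq_eq_norm_sq, Complex.normSq_apply]
      simp only [Complex.sub_re, Complex.sub_im, Complex.mul_re, Complex.mul_im,
        Complex.ofReal_re, Complex.ofReal_im, Complex.conj_re, Complex.conj_im,
        Complex.one_re, Complex.one_im,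
        Complex.exp_ofReal_mul_I_re, Complex.exp_ofReal_mul_I_im, hre, him]
      linear_combination r ^ 2 * ρ ^ 2 * (s1 * (Real.sin a ^ 2 + Real.cos a ^ 2) + s2)
        - 2 * r * ρ * hc
    rw [e]
    nlinarith [sq_nonneg (1 - r * ρ)]

lemma pointwise_aux (s : ℕ) {p Ck c x η m D N A : ℝ} (hp : 1 < p) (hM : 1 < ((s : ℝ) + 1) * p)
    (hCk : 0 < Ck) (hc : 0 < c) (hx : 0 < x) (hη : 0 < η) (hm : 0 < m)
    (hD : c * (η + m) ≤ D) (hN : c * m ≤ N) (hA0 : 0 ≤ A) (hA : A ≤ 2 * x / D) :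
    (Ck * (A ^ (s + 1) * (N / D) ^ (-(1 / (2 * p))))) ^ p ≤
      Ck ^ p * (2 * x) ^ (((s : ℝ) + 1) * p) * c ^ (-(((s : ℝ) + 1) * p)) *
        ((η + m) ^ (1 / 2 - ((s : ℝ) + 1) * p) * m ^ (-(1 / 2) : ℝ)) := by
  have hp0 : 0 < p := by linarith
  set M := ((s : ℝ) + 1) * p with hMdef
  have hcm : 0 < c * m := by positivity
  have hcD : 0 < c * (η + m) := by positivity
  have hN0 : 0 < N := by linarith
  have hD0 : 0 < D := by linarith
  have h1 : (A ^ (s + 1)) ^ p ≤ (2 * x) ^ M * D ^ (-M) := by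
    rw [← Real.rpow_natCast A (s + 1), ← Real.rpow_mul hA0]
    push_cast
    rw [← hMdef]
    calc A ^ M ≤ (2 * x / D) ^ M := Real.rpow_le_rpow hA0 hA (by linarith)
      _ = _ := by rw [Real.div_rpow (by positivity) hD0.le, Real.rpow_neg hD0.le]; rfl
  have h2 : ((N / D) ^ (-(1 / (2 * p)))) ^ p = N ^ (-(1 / 2) : ℝ) * D ^ (1 / 2 : ℝ) := by
    rw [← Real.rpow_mul (by positivity)]
    have : -(1 / (2 * p)) * p = -(1 / 2) := by field_simp
    rw [this, Real.div_rpow hN0.le hD0.le, Real.rpow_neg hD0.le, div_inv_eq_mul]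
  rw [Real.mul_rpow hCk.le (by positivity), Real.mul_rpow (by positivity) (by positivity), h2,
    mul_assoc, mul_assoc]
  have h3 : D ^ (1 / 2 - M) ≤ c ^ (1 / 2 - M) * (η + m) ^ (1 / 2 - M) := by
    rw [← Real.mul_rpow hc.le (by positivity)]
    exact Real.rpow_le_rpow_of_nonpos hcD hD (by linarith)
  have h4 : N ^ (-(1 / 2) : ℝ) ≤ c ^ (-(1 / 2) : ℝ) * m ^ (-(1 / 2) : ℝ) := by
    rw [← Real.mul_rpow hc.le (by positivity)]
    exact Real.rpow_le_rpow_of_nonpos hcm hN (by linarith)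
  have h5 : c ^ (1 / 2 - M) * c ^ (-(1 / 2) : ℝ) = c ^ (-M) := by
    rw [← Real.rpow_add hc]; congr 1; ring
  have h6 : D ^ (-M) * D ^ (1 / 2 : ℝ) = D ^ (1 / 2 - M) := by
    rw [← Real.rpow_add hD0]; congr 1; ring
  gcongr Ck ^ p * ?_
  calc (A ^ (s + 1)) ^ p * (N ^ (-(1 / 2) : ℝ) * D ^ (1 / 2 : ℝ))
      ≤ ((2 * x) ^ M * D ^ (-M)) * (N ^ (-(1 / 2) : ℝ) * D ^ (1 / 2 : ℝ)) := by gcongr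
    _ = (2 * x) ^ M * (D ^ (1 / 2 - M) * N ^ (-(1 / 2) : ℝ)) := by rw [← h6]; ring
    _ ≤ (2 * x) ^ M * ((c ^ (1 / 2 - M) * (η + m) ^ (1 / 2 - M)) *
          (c ^ (-(1 / 2) : ℝ) * m ^ (-(1 / 2) : ℝ))) := by gcongr
    _ = _ := by rw [← h5]; ring

lemma theta_bound (s : ℕ) {p Ck : ℝ} (hp : 1 < p) (hM : 1 < ((s : ℝ) + 1) * p) (hCk : 0 < Ck) :
    ∃ C : ℝ, 0 < C ∧ ∀ r : ℝ, 1 / 2 ≤ r → r < 1 → ∀ ζ : ℂ, 1 / 2 ≤ ‖ζ‖ → ‖ζ‖ < 1 →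
      ∫⁻ θ in Set.Ioc (0 : ℝ) (2 * Real.pi), ENNReal.ofReal (Ck *
        (‖Acayley ((r : ℂ) * Complex.exp (θ * Complex.I)) ζ‖ ^ (s + 1) *
          (‖(r : ℂ) * Complex.exp (θ * Complex.I) - ζ‖ /
            ‖1 - (r : ℂ) * Complex.exp (θ * Complex.I) * (starRingEnd ℂ) ζ‖) ^
              (-(1 / (2 * p))))) ^ p ≤
      ENNReal.ofReal (C * ((1 - ‖ζ‖) ^ ((s : ℝ) + 1) *
        (1 - r * ‖ζ‖) ^ (1 / p - ((s : ℝ) + 1)))) ^ p := by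
  have hp0 : 0 < p := by linarith
  have hpi := Real.pi_pos
  obtain ⟨C0, hC0, hint⟩ := hint_aux hM
  set M := ((s : ℝ) + 1) * p with hMdef
  set c : ℝ := 1 / (2 * Real.pi) with hc
  have hc0 : 0 < c := by positivity
  set B : ℝ := Ck ^ p * 2 ^ M * c ^ (-M) * (2 * C0) with hB
  have hB0 : 0 ≤ B := by positivity
  refine ⟨(B + 1) ^ (1 / p), by positivity, fun r hr1 hr2 ζ hζ1 hζ2 => ?_⟩
  set x := 1 - ‖ζ‖ with hx
  set η := 1 - r * ‖ζ‖ with hη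
  have hx0 : 0 < x := by linarith
  have hη0 : 0 < η := by nlinarith
  set H : ℝ → ENNReal :=
    fun t => ENNReal.ofReal ((η + |t|) ^ (1 / 2 - M) * |t| ^ (-(1 / 2) : ℝ)) with hH
  set b : ℝ := Ck ^ p * (2 * x) ^ M * c ^ (-M) with hb
  have hb0 : 0 ≤ b := by positivity
  have hHm : Measurable H := by
    rw [hH]; fun_prop
  have key : ∀ θ ∈ Set.Ioc (0 : ℝ) (2 * Real.pi), θ - ζ.arg ≠ 0 → θ - ζ.arg - 2 * Real.pi ≠ 0 →
      ENNReal.ofReal (Ck *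
        (‖Acayley ((r : ℂ) * Complex.exp (θ * Complex.I)) ζ‖ ^ (s + 1) *
          (‖(r : ℂ) * Complex.exp (θ * Complex.I) - ζ‖ /
            ‖1 - (r : ℂ) * Complex.exp (θ * Complex.I) * (starRingEnd ℂ) ζ‖) ^
              (-(1 / (2 * p))))) ^ p ≤
        ENNReal.ofReal b * (H (θ - ζ.arg) + H (θ - ζ.arg - 2 * Real.pi)) := by
    intro θ hθ hne1 hne2
    have hznorm : ‖(r : ℂ) * Complex.exp (θ * Complex.I)‖ = r := by
      rw [norm_mul, Complex.norm_exp_ofReal_mul_I, mul_one, Complex.norm_real, Real.norm_eq_abs,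
        abs_of_nonneg (by linarith)]
    obtain ⟨d1, d2⟩ := dist_lower (r := r) (θ := θ) (ζ := ζ) hr1 hζ1
    have d3 := D_lower ((r : ℂ) * Complex.exp (θ * Complex.I)) ζ
    rw [hznorm] at d3
    have hAn := A_norm (z := (r : ℂ) * Complex.exp (θ * Complex.I)) hζ2
    set z := (r : ℂ) * Complex.exp (θ * Complex.I) with hz
    have hDpos : 0 < ‖1 - z * (starRingEnd ℂ) ζ‖ := lt_of_lt_of_le hη0 d3
    set t := θ - ζ.arg with ht
    have harg1 := Complex.neg_pi_lt_arg ζ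
    have harg2 := Complex.arg_le_pi ζ
    have hs := sin_lower (t := t) (by linarith [hθ.1]) (by linarith [hθ.2])
    set m := min |t| |t - 2 * Real.pi| with hm
    have hm0 : 0 < m := lt_min (abs_pos.2 hne1) (abs_pos.2 hne2)
    have hcm : c * m ≤ m / Real.pi := by
      rw [hc, div_mul_eq_mul_div, one_mul]
      gcongr
      linarith
    have hpi1 : 1 ≤ Real.pi := by linarith [Real.pi_gt_three]
    have hcη : c * (η + m) ≤ ‖1 - z * (starRingEnd ℂ) ζ‖ := by
      have e1 : c * (η + m) = (η / Real.pi + m / Real.pi) / 2 := by rw [hc]; field_simp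
      have e2 : η / Real.pi ≤ η := div_le_self hη0.le hpi1
      rw [e1]; linarith
    have hpt := pointwise_aux s (p := p) (Ck := Ck) (c := c) (x := x) (η := η) (m := m)
      (D := ‖1 - z * (starRingEnd ℂ) ζ‖) (N := ‖z - ζ‖) (A := ‖Acayley z ζ‖) hp hM hCk hc0 hx0 hη0
      hm0 hcη (by linarith) (norm_nonneg _) (by
        rw [hAn]
        gcongr
        nlinarith)
    rw [ENNReal.ofReal_rpow_of_nonneg (by positivity) hp0.le]
    calc _ ≤ ENNReal.ofReal (b * ((η + m) ^ (1 / 2 - M) * m ^ (-(1 / 2) : ℝ))) :=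
          ENNReal.ofReal_le_ofReal hpt
      _ = ENNReal.ofReal b * ENNReal.ofReal ((η + m) ^ (1 / 2 - M) * m ^ (-(1 / 2) : ℝ)) :=
          ENNReal.ofReal_mul hb0
      _ ≤ _ := by
          gcongr
          rcases min_choice |t| |t - 2 * Real.pi| with h | h
          · rw [hm, h]; exact le_self_add
          · rw [hm, h]; exact le_add_self
  have hae : ∀ᵐ θ ∂(volume.restrict (Set.Ioc (0 : ℝ) (2 * Real.pi))),
      θ ∈ Set.Ioc (0 : ℝ) (2 * Real.pi) ∧ θ - ζ.arg ≠ 0 ∧ θ - ζ.arg - 2 * Real.pi ≠ 0 := by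
    have n1 : ∀ᵐ θ ∂(volume.restrict (Set.Ioc (0 : ℝ) (2 * Real.pi))), θ ≠ ζ.arg :=
      ae_restrict_of_ae (Measure.ae_ne volume _)
    have n2 : ∀ᵐ θ ∂(volume.restrict (Set.Ioc (0 : ℝ) (2 * Real.pi))), θ ≠ ζ.arg + 2 * Real.pi :=
      ae_restrict_of_ae (Measure.ae_ne volume _)
    filter_upwards [ae_restrict_mem measurableSet_Ioc, n1, n2] with θ h1 h2 h3
    refine ⟨h1, sub_ne_zero.2 h2, fun h => h3 (by linarith)⟩
  calc _ ≤ ∫⁻ θ in Set.Ioc (0 : ℝ) (2 * Real.pi),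
        ENNReal.ofReal b * (H (θ - ζ.arg) + H (θ - ζ.arg - 2 * Real.pi)) := by
        apply lintegral_mono_ae
        filter_upwards [hae] with θ h
        exact key θ h.1 h.2.1 h.2.2
    _ ≤ ∫⁻ θ, ENNReal.ofReal b * (H (θ - ζ.arg) + H (θ - ζ.arg - 2 * Real.pi)) :=
        setLIntegral_le_lintegral _ _
    _ = ENNReal.ofReal b * ((∫⁻ θ, H θ) + ∫⁻ θ, H θ) := by
        rw [lintegral_const_mul _ (by fun_prop), lintegral_add_left (by fun_prop)]
        congr 2
        · exact lintegral_sub_right_eq_self H _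
        · rw [lintegral_sub_right_eq_self (fun θ => H (θ - 2 * Real.pi))]
          exact lintegral_sub_right_eq_self H _
    _ ≤ ENNReal.ofReal b * (ENNReal.ofReal (C0 * η ^ (1 - M)) +
          ENNReal.ofReal (C0 * η ^ (1 - M))) := by
        gcongr
        · exact hint η hη0
        · exact hint η hη0
    _ = ENNReal.ofReal (B * (x ^ M * η ^ (1 - M))) := by
        rw [← ENNReal.ofReal_add (by positivity) (by positivity), ← ENNReal.ofReal_mul hb0]
        congr 1
        rw [hb, hB, Real.mul_rpow (by norm_num) hx0.le]
        ring
    _ ≤ _ := by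
        rw [ENNReal.ofReal_rpow_of_nonneg (by positivity) hp0.le]
        apply ENNReal.ofReal_le_ofReal
        rw [Real.mul_rpow (by positivity) (by positivity),
          Real.mul_rpow (by positivity) (by positivity), ← Real.rpow_mul (by positivity),
          ← Real.rpow_mul hx0.le, ← Real.rpow_mul hη0.le]
        have e1 : 1 / p * p = 1 := by field_simp
        have e2 : (1 / p - ((s : ℝ) + 1)) * p = 1 - M := by rw [sub_mul, e1]
        rw [e1, e2, Real.rpow_one, ← hMdef]
        gcongr
        linarith

lemma annulus_meas (a b : ℝ) : MeasurableSet {ζ : ℂ | a ≤ 1 - ‖ζ‖ ∧ 1 - ‖ζ‖ ≤ b} := by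
  have h : Measurable fun ζ : ℂ => 1 - ‖ζ‖ := by fun_prop
  exact h measurableSet_Icc

lemma mass_bound (μ : Measure ℂ) {a b β K : ℝ} (hb : 0 < b) (hbβ : b < β) (hβa : β < a)
    (hK : 0 ≤ K) (hn : ∀ x : ℝ, 0 < x → x ≤ 1 →
      μ (Metric.closedBall (0 : ℂ) (1 - x)) ≤ ENNReal.ofReal (K * x ^ (-β))) :
    ∃ C : ℝ, 0 ≤ C ∧ ∀ r : ℝ, 0 < r → r < 1 →
      ∫⁻ ζ in {ζ : ℂ | 1 / 2 ≤ ‖ζ‖ ∧ ‖ζ‖ < 1}, ENNReal.ofReal ((1 - ‖ζ‖) ^ a *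
        (1 - r * ‖ζ‖) ^ (b - a)) ∂μ ≤ ENNReal.ofReal (C * (1 - r) ^ (b - β)) := by
  set q1 : ℝ := 2 ^ (b - β) with hq1
  set q2 : ℝ := (1 / 2) ^ (a - β) with hq2
  have hq1lt : q1 < 1 := Real.rpow_lt_one_of_one_lt_of_neg (by norm_num) (by linarith)
  have hq2lt : q2 < 1 := Real.rpow_lt_one (by norm_num) (by norm_num) (by linarith)
  have hq10 : 0 ≤ q1 := by positivity
  have hq20 : 0 ≤ q2 := by positivity
  have hq1pos : 0 < 1 - q1 := by linarith
  have hq2pos : 0 < 1 - q2 := by linarith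
  refine ⟨K * 2 ^ b / (1 - q1) + K * (1 / 2) ^ (-β) / (1 - q2), by positivity,
    fun r hr0 hr1 => ?_⟩
  set δ := 1 - r with hδ
  have hδ0 : 0 < δ := by linarith
  set g : ℂ → ℝ := fun ζ => (1 - ‖ζ‖) ^ a * (1 - r * ‖ζ‖) ^ (b - a) with hg
  have hsub : {ζ : ℂ | 1 / 2 ≤ ‖ζ‖ ∧ ‖ζ‖ < 1} ⊆
      {ζ : ℂ | δ ≤ 1 - ‖ζ‖} ∪ {ζ : ℂ | 0 < 1 - ‖ζ‖ ∧ 1 - ‖ζ‖ < δ} := by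
    intro ζ hζ
    rcases le_or_gt δ (1 - ‖ζ‖) with h | h
    · exact Or.inl h
    · exact Or.inr ⟨by linarith [hζ.2], h⟩
  have h1 : ∫⁻ ζ in {ζ : ℂ | δ ≤ 1 - ‖ζ‖}, ENNReal.ofReal (g ζ) ∂μ ≤
      ENNReal.ofReal (K * 2 ^ b * δ ^ (b - β) / (1 - q1)) := by
    refine geo_aux μ _ (fun k : ℕ => {ζ : ℂ | δ * 2 ^ k ≤ 1 - ‖ζ‖ ∧ 1 - ‖ζ‖ ≤ δ * 2 ^ (k + 1)})
      ?_ ?_ g (fun k => (δ * 2 ^ (k + 1)) ^ b) (fun k => K * (δ * 2 ^ k) ^ (-β)) ?_ ?_ ?_ _ q1 ?_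
      hq10 hq1lt ?_
    · intro k
      exact annulus_meas _ _
    · intro ζ hζ
      have hζ' : δ ≤ 1 - ‖ζ‖ := hζ
      obtain ⟨k, hk1, hk2⟩ := exists_nat_pow_near (x := (1 - ‖ζ‖) / δ) (y := (2 : ℝ))
        ((one_le_div hδ0).2 hζ') (by norm_num)
      rw [Set.mem_iUnion]
      refine ⟨k, ?_, ?_⟩
      · rw [le_div_iff₀ hδ0] at hk1; linarith
      · rw [div_lt_iff₀ hδ0] at hk2; linarith
    · intro k; positivity
    · rintro k ζ ⟨hk1, hk2⟩
      have hx0 : 0 < 1 - ‖ζ‖ := lt_of_lt_of_le (by positivity) hk1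
      have hη : 1 - ‖ζ‖ ≤ 1 - r * ‖ζ‖ := by nlinarith [norm_nonneg ζ]
      calc g ζ ≤ (1 - ‖ζ‖) ^ a * (1 - ‖ζ‖) ^ (b - a) := by
            have := Real.rpow_le_rpow_of_nonpos hx0 hη (show b - a ≤ 0 by linarith)
            simp only [hg]
            gcongr
        _ = (1 - ‖ζ‖) ^ b := by rw [← Real.rpow_add hx0]; congr 1; ring
        _ ≤ _ := Real.rpow_le_rpow hx0.le hk2 hb.le
    · intro k
      rcases le_or_gt (δ * 2 ^ k) 1 with h | h
      · refine (measure_mono ?_).trans (hn (δ * 2 ^ k) (by positivity) h)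
        rintro ζ ⟨hk1, hk2⟩
        rw [mem_closedBall_zero_iff]; linarith
      · have : {ζ : ℂ | δ * 2 ^ k ≤ 1 - ‖ζ‖ ∧ 1 - ‖ζ‖ ≤ δ * 2 ^ (k + 1)} = ∅ := by
          ext ζ
          simp only [Set.mem_ofPred_eq, Set.mem_empty_iff_false, iff_false, not_and]
          intro h1
          linarith [norm_nonneg ζ]
        rw [this]; simp
    · positivity
    · intro k
      apply le_of_eq
      have e : δ * 2 ^ (k + 1) = 2 * (δ * 2 ^ k) := by ring
      have hp : 0 < δ * 2 ^ k := by positivity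
      rw [e, Real.mul_rpow (by norm_num) hp.le, hq1, Real.rpow_pow_comm (by norm_num)]
      have : (δ * 2 ^ k) ^ b * (δ * 2 ^ k) ^ (-β) = δ ^ (b - β) * (2 ^ k) ^ (b - β) := by
        rw [← Real.rpow_add hp, ← sub_eq_add_neg, Real.mul_rpow hδ0.le (by positivity)]
      linear_combination (2 ^ b * K) * this
  have h2 : ∫⁻ ζ in {ζ : ℂ | 0 < 1 - ‖ζ‖ ∧ 1 - ‖ζ‖ < δ}, ENNReal.ofReal (g ζ) ∂μ ≤
      ENNReal.ofReal (K * (1 / 2) ^ (-β) * δ ^ (b - β) / (1 - q2)) := by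
    refine geo_aux μ _ (fun k : ℕ => {ζ : ℂ | δ * (1 / 2) ^ (k + 1) ≤ 1 - ‖ζ‖ ∧
      1 - ‖ζ‖ ≤ δ * (1 / 2) ^ k})
      ?_ ?_ g (fun k => (δ * (1 / 2) ^ k) ^ a * δ ^ (b - a))
      (fun k => K * (δ * (1 / 2) ^ (k + 1)) ^ (-β)) ?_ ?_ ?_ _ q2 ?_
      hq20 hq2lt ?_
    · intro k
      exact annulus_meas _ _
    · rintro ζ ⟨hζ0, hζ'⟩
      obtain ⟨k, hk1, hk2⟩ := exists_nat_pow_near_of_lt_one (x := (1 - ‖ζ‖) / δ) (y := (1 / 2 : ℝ))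
        (by positivity) ((div_le_one hδ0).2 hζ'.le) (by norm_num) (by norm_num)
      rw [Set.mem_iUnion]
      refine ⟨k, ?_, ?_⟩
      · rw [lt_div_iff₀ hδ0] at hk1; linarith
      · rw [div_le_iff₀ hδ0] at hk2; linarith
    · intro k; positivity
    · rintro k ζ ⟨hk1, hk2⟩
      have hx0 : 0 < 1 - ‖ζ‖ := lt_of_lt_of_le (by positivity) hk1
      have hη : δ ≤ 1 - r * ‖ζ‖ := by nlinarith [norm_nonneg ζ]
      have e1 := Real.rpow_le_rpow_of_nonpos hδ0 hη (show b - a ≤ 0 by linarith)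
      have e2 := Real.rpow_le_rpow hx0.le hk2 (show 0 ≤ a by linarith)
      have e3 : 0 ≤ (1 - r * ‖ζ‖) ^ (b - a) := Real.rpow_nonneg (by linarith) _
      simp only [hg]
      gcongr
    · intro k
      have hle : ((1 : ℝ) / 2) ^ (k + 1) ≤ 1 := pow_le_one₀ (by norm_num) (by norm_num)
      refine (measure_mono ?_).trans (hn (δ * (1 / 2) ^ (k + 1)) (by positivity) ?_)
      · rintro ζ ⟨hk1, hk2⟩
        rw [mem_closedBall_zero_iff]; linarith
      · have : 0 < ((1 : ℝ) / 2) ^ (k + 1) := by positivity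
        nlinarith
    · positivity
    · intro k
      apply le_of_eq
      have e : δ * (1 / 2) ^ (k + 1) = (1 / 2) * (δ * (1 / 2) ^ k) := by ring
      have hp : 0 < δ * (1 / 2) ^ k := by positivity
      rw [e, Real.mul_rpow (by norm_num) hp.le, hq2, Real.rpow_pow_comm (by norm_num)]
      have e1 : (δ * (1 / 2) ^ k) ^ a * (δ * (1 / 2) ^ k) ^ (-β) =
          δ ^ (a - β) * ((1 / 2) ^ k) ^ (a - β) := by
        rw [← Real.rpow_add hp, ← sub_eq_add_neg, Real.mul_rpow hδ0.le (by positivity)]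
      have e2 : δ ^ (a - β) * δ ^ (b - a) = δ ^ (b - β) := by
        rw [← Real.rpow_add hδ0]; congr 1; ring
      linear_combination ((1 / 2) ^ (-β) * K * δ ^ (b - a)) * e1 +
        ((1 / 2) ^ (-β) * K * ((1 / 2) ^ k) ^ (a - β)) * e2
  calc _ ≤ _ := lintegral_mono_set hsub
    _ ≤ _ := lintegral_union_le _ _ _
    _ ≤ _ := add_le_add h1 h2
    _ = _ := by
      rw [← ENNReal.ofReal_add (by positivity) (by positivity)]
      congr 1
      ring

lemma ball_finite (μ : Measure ℂ) (s : ℕ)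
    (hμfin : ∫⁻ ζ in Metric.ball (0 : ℂ) 1, ENNReal.ofReal ((1 - ‖ζ‖) ^ (s + 1)) ∂μ < ⊤)
    {t : ℝ} (ht : t < 1) : μ (Metric.closedBall (0 : ℂ) t) < ⊤ := by
  have h1 : ENNReal.ofReal ((1 - t) ^ (s + 1)) * μ (Metric.closedBall (0 : ℂ) t) < ⊤ := by
    refine lt_of_le_of_lt ?_ hμfin
    calc _ = ∫⁻ ζ in Metric.closedBall (0 : ℂ) t, ENNReal.ofReal ((1 - t) ^ (s + 1)) ∂μ := by simp
      _ ≤ ∫⁻ ζ in Metric.closedBall (0 : ℂ) t, ENNReal.ofReal ((1 - ‖ζ‖) ^ (s + 1)) ∂μ := by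
        apply setLIntegral_mono' Metric.isClosed_closedBall.measurableSet
        intro ζ hζ
        rw [mem_closedBall_zero_iff] at hζ
        apply ENNReal.ofReal_le_ofReal
        have : 0 ≤ 1 - t := by linarith
        gcongr
      _ ≤ _ := lintegral_mono_set (Metric.closedBall_subset_ball ht)
  have h2 : ENNReal.ofReal ((1 - t) ^ (s + 1)) ≠ 0 := by
    have : 0 < 1 - t := by linarith
    rw [Ne, ENNReal.ofReal_eq_zero, not_le]
    positivity
  exact ENNReal.lt_top_of_mul_ne_top_right h1.ne h2

lemma growth_all (μ : Measure ℂ) (s : ℕ)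
    (hμfin : ∫⁻ ζ in Metric.ball (0 : ℂ) 1, ENNReal.ofReal ((1 - ‖ζ‖) ^ (s + 1)) ∂μ < ⊤)
    {β : ℝ} (hβ : 0 < β)
    (hn : ∃ C₂ : ℝ, ∃ r₀ ∈ Set.Ico (0 : ℝ) 1, ∀ r ∈ Set.Ioo r₀ 1,
      (μ (Metric.closedBall (0 : ℂ) r)).toReal ≤ C₂ * (1 - r) ^ (-β)) :
    ∃ K : ℝ, 0 ≤ K ∧ ∀ x : ℝ, 0 < x → x ≤ 1 →
      μ (Metric.closedBall (0 : ℂ) (1 - x)) ≤ ENNReal.ofReal (K * x ^ (-β)) := by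
  obtain ⟨C, r₀, hr₀, h⟩ := hn
  set m := (μ (Metric.closedBall (0 : ℂ) r₀)).toReal with hm
  have hm0 : 0 ≤ m := ENNReal.toReal_nonneg
  refine ⟨max C 0 + m, by positivity, fun x hx0 hx1 => ?_⟩
  have hxβ : 1 ≤ x ^ (-β) :=
    Real.one_le_rpow_of_pos_of_le_one_of_nonpos hx0 hx1 (by linarith)
  have hC : C ≤ max C 0 + m := by linarith [le_max_left C 0]
  have hm1 : m ≤ max C 0 + m := by linarith [le_max_right C 0]
  rcases le_or_gt (1 - x) r₀ with h1 | h1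
  · calc _ ≤ μ (Metric.closedBall (0 : ℂ) r₀) := measure_mono (Metric.closedBall_subset_closedBall h1)
      _ = ENNReal.ofReal m := (ENNReal.ofReal_toReal (ball_finite μ s hμfin hr₀.2).ne).symm
      _ ≤ _ := by
        apply ENNReal.ofReal_le_ofReal
        nlinarith
  · have h2 := h (1 - x) ⟨h1, by linarith⟩
    rw [sub_sub_cancel] at h2
    rw [← ENNReal.ofReal_toReal (ball_finite μ s hμfin (show 1 - x < 1 by linarith)).ne]
    apply ENNReal.ofReal_le_ofReal
    refine h2.trans ?_
    gcongr

lemma sfin_aux (μ : Measure ℂ) (s : ℕ)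
    (hμfin : ∫⁻ ζ in Metric.ball (0 : ℂ) 1, ENNReal.ofReal ((1 - ‖ζ‖) ^ (s + 1)) ∂μ < ⊤) :
    SFinite (μ.restrict (Metric.ball (0 : ℂ) 1)) := by
  have h1 : IsFiniteMeasure ((μ.restrict (Metric.ball (0 : ℂ) 1)).withDensity
    fun ζ => ENNReal.ofReal ((1 - ‖ζ‖) ^ (s + 1))) := isFiniteMeasure_withDensity hμfin.ne
  rw [← withDensity_inv_same (μ := μ.restrict (Metric.ball (0 : ℂ) 1))
    (f := fun ζ => ENNReal.ofReal ((1 - ‖ζ‖) ^ (s + 1))) (by fun_prop) ?_ ?_]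
  · infer_instance
  · filter_upwards [ae_restrict_mem Metric.isOpen_ball.measurableSet] with ζ hζ
    rw [mem_ball_zero_iff] at hζ
    have : 0 < 1 - ‖ζ‖ := by linarith
    rw [Ne, ENNReal.ofReal_eq_zero, not_le]
    positivity
  · filter_upwards with ζ
    exact ENNReal.ofReal_ne_top

lemma norm_re (r θ : ℝ) (hr : 0 ≤ r) : ‖(r : ℂ) * Complex.exp (θ * Complex.I)‖ = r := by
  rw [norm_mul, Complex.norm_exp_ofReal_mul_I, mul_one, Complex.norm_real, Real.norm_eq_abs,
    abs_of_nonneg hr]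

/-- For the canonical integral `u(z) = ∫_𝔻 log|E(A(z,ζ),s)| dμ(ζ)` with
`α + 1/p < s + 1`, if `n(r,u) = μ(closedBall 0 r) = O((1-r)^{-α-1/p})` as `r ↑ 1`,
then `m_p(r,u) = O((1-r)^{-α})` as `r ↑ 1`. -/
theorem stmt5 (s : ℕ) (u : ℂ → ℝ) (μ : Measure ℂ) (α p : ℝ)
    (hp : 1 < p) (hα : 0 < α) (hαp : α + 1 / p < (s : ℝ) + 1)
    -- `μ` is a positive Borel measure on `𝔻` with `∫_𝔻 (1-|ζ|)^{s+1} dμ(ζ) < ∞`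
    (hμD : μ (Metric.ball (0 : ℂ) 1)ᶜ = 0)
    (hμfin : ∫⁻ ζ in Metric.ball (0 : ℂ) 1,
      ENNReal.ofReal ((1 - ‖ζ‖) ^ (s + 1)) ∂μ < ⊤)
    -- `u` is the canonical integral of `μ`
    (hrep : ∀ z ∈ Metric.ball (0 : ℂ) 1,
      u z = ∫ ζ in Metric.ball (0 : ℂ) 1,
        Real.log ‖weierE (Acayley z ζ) s‖ ∂μ)
    -- growth of the counting function
    (hn : ∃ C₂ : ℝ, ∃ r₀ ∈ Set.Ico (0 : ℝ) 1, ∀ r ∈ Set.Ioo r₀ 1,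
      (μ (Metric.closedBall (0 : ℂ) r)).toReal ≤ C₂ * (1 - r) ^ (-α - 1 / p)) :
    ∃ C₁ : ℝ, ∃ r₀ ∈ Set.Ico (0 : ℝ) 1, ∀ r ∈ Set.Ioo r₀ 1,
      mpMean p r u ≤ C₁ * (1 - r) ^ (-α) := by
  have hp0 : 0 < p := by linarith
  have hpi := Real.pi_pos
  have hb0 : 0 < 1 / p := by positivity
  have hβ0 : 0 < α + 1 / p := by positivity
  have hM : 1 < ((s : ℝ) + 1) * p := by
    have h1 : 1 / p < (s : ℝ) + 1 := by linarith
    rwa [div_lt_iff₀ hp0] at h1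
  have eβ : -α - 1 / p = -(α + 1 / p) := by ring
  rw [eβ] at hn
  obtain ⟨K, hK0, hK⟩ := growth_all μ s hμfin hβ0 hn
  obtain ⟨Cm, hCm0, hCm⟩ := mass_bound μ hb0 (show 1 / p < α + 1 / p by linarith) hαp hK0 hK
  have eα : 1 / p - (α + 1 / p) = -α := by ring
  rw [eα] at hCm
  obtain ⟨Ck, hCk0, hCk⟩ := K_main s (ε := 1 / (2 * p)) (by positivity)
  obtain ⟨Cn, hCn0, hCn⟩ := K_near s
  obtain ⟨Ct, hCt0, hCt⟩ := theta_bound s hp hM hCk0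
  have hfinhalf : μ (Metric.ball (0 : ℂ) (1 / 2)) < ⊤ :=
    (measure_mono Metric.ball_subset_closedBall).trans_lt
      (ball_finite μ s hμfin (show (1 / 2 : ℝ) < 1 by norm_num))
  have hmeasK : ∀ z : ℂ, Measurable fun ζ => Real.log ‖weierE (Acayley z ζ) s‖ := by
    intro z
    have hA : Measurable fun ζ => Acayley z ζ := by
      unfold Acayley
      have : Measurable fun ζ : ℂ => (starRingEnd ℂ) ζ := Complex.continuous_conj.measurable
      fun_prop
    have hE : Measurable fun w : ℂ => weierE w s := by
      unfold weierE; fun_prop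
    exact Real.measurable_log.comp (hE.comp hA).norm
  by_cases hL : IntegrableOn (fun ζ : ℂ => Real.log ‖ζ‖) (Metric.ball (0 : ℂ) (1 / 2)) μ
  swap
  · skip
    refine ⟨0, 3 / 4, ⟨by norm_num, by norm_num⟩, fun r hr => ?_⟩
    have hu : ∀ θ : ℝ, u ((r : ℂ) * Complex.exp (θ * Complex.I)) = 0 := by
      intro θ
      have hz := norm_re r θ (by linarith [hr.1])
      rw [hrep _ (by rw [mem_ball_zero_iff, hz]; exact hr.2)]
      apply integral_undef
      intro hint
      apply hL
      have h1 : IntegrableOn (fun ζ : ℂ => Real.log ‖weierE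
          (Acayley ((r : ℂ) * Complex.exp (θ * Complex.I)) ζ) s‖) (Metric.ball (0 : ℂ) (1 / 2)) μ :=
        IntegrableOn.mono_set hint (Metric.ball_subset_ball (by norm_num))
      have h2 : IntegrableOn (fun ζ : ℂ => Real.log ‖weierE
          (Acayley ((r : ℂ) * Complex.exp (θ * Complex.I)) ζ) s‖ - Real.log ‖ζ‖)
          (Metric.ball (0 : ℂ) (1 / 2)) μ := by
        refine Measure.integrableOn_of_bounded (M := Cn) hfinhalf.ne
          ((hmeasK _).sub (by fun_prop)).aestronglyMeasurable ?_
        filter_upwards [ae_restrict_mem Metric.isOpen_ball.measurableSet] with ζ hζ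
        rw [mem_ball_zero_iff] at hζ
        exact hCn _ ζ (by rw [hz]; exact hr.1.le) (by rw [hz]; exact hr.2) hζ
      have h3 := h1.sub h2
      refine h3.congr ?_
      filter_upwards with ζ
      simp
    rw [mpMean]
    simp only [hu, abs_zero, Real.zero_rpow hp0.ne', intervalIntegral.integral_zero, mul_zero,
      zero_mul]
    rw [Real.zero_rpow hb0.ne']
  set R : Set ℂ := {ζ : ℂ | 1 / 2 ≤ ‖ζ‖ ∧ ‖ζ‖ < 1} with hR
  have hRm : MeasurableSet R := by
    have h : Measurable fun ζ : ℂ => ‖ζ‖ := by fun_prop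
    exact h measurableSet_Ico
  have hRball : R ⊆ Metric.ball (0 : ℂ) 1 := by
    intro ζ hζ; rw [mem_ball_zero_iff]; exact hζ.2
  have := sfin_aux μ s hμfin
  have hsf : SFinite (μ.restrict R) := by
    have : μ.restrict R = (μ.restrict (Metric.ball (0 : ℂ) 1)).restrict R := by
      rw [Measure.restrict_restrict hRm, Set.inter_eq_left.2 hRball]
    rw [this]; infer_instance
  have hLfin : ∫⁻ ζ in Metric.ball (0 : ℂ) (1 / 2),
      ENNReal.ofReal (|Real.log ‖ζ‖| + Cn) ∂μ < ⊤ := by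
    have h1 : IntegrableOn (fun ζ : ℂ => |Real.log ‖ζ‖| + Cn) (Metric.ball (0 : ℂ) (1 / 2)) μ :=
      hL.abs.add (integrableOn_const hfinhalf.ne)
    exact h1.lintegral_lt_top
  set L := (∫⁻ ζ in Metric.ball (0 : ℂ) (1 / 2), ENNReal.ofReal (|Real.log ‖ζ‖| + Cn) ∂μ).toReal
    with hLdef
  have hL0 : 0 ≤ L := ENNReal.toReal_nonneg
  have hLeq : ∫⁻ ζ in Metric.ball (0 : ℂ) (1 / 2), ENNReal.ofReal (|Real.log ‖ζ‖| + Cn) ∂μ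
    = ENNReal.ofReal L := (ENNReal.ofReal_toReal hLfin.ne).symm
  set B : ℝ := 2 ^ (p - 1) * (2 * Real.pi * L ^ p + (Ct * Cm) ^ p) with hB
  have hB0 : 0 ≤ B := by positivity
  refine ⟨(1 / (2 * Real.pi) * B) ^ (1 / p), 3 / 4, ⟨by norm_num, by norm_num⟩, fun r hr => ?_⟩
  have hr34 : 3 / 4 < r := hr.1
  have hr1 : r < 1 := hr.2
  set δ := 1 - r with hδ
  have hδ0 : 0 < δ := by linarith
  set f : ℝ → ℂ → ENNReal := fun θ ζ => ENNReal.ofReal (Ck *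
        (‖Acayley ((r : ℂ) * Complex.exp (θ * Complex.I)) ζ‖ ^ (s + 1) *
          (‖(r : ℂ) * Complex.exp (θ * Complex.I) - ζ‖ /
            ‖1 - (r : ℂ) * Complex.exp (θ * Complex.I) * (starRingEnd ℂ) ζ‖) ^
              (-(1 / (2 * p))))) with hf
  set G : ℂ → ENNReal := fun ζ => ENNReal.ofReal (Ct * ((1 - ‖ζ‖) ^ ((s : ℝ) + 1) *
        (1 - r * ‖ζ‖) ^ (1 / p - ((s : ℝ) + 1)))) with hG
  have hfm : Measurable (Function.uncurry f) := by
    have hconj : Measurable fun ζ : ℂ => (starRingEnd ℂ) ζ := Complex.continuous_conj.measurable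
    have hc2 : Measurable fun x : ℝ × ℂ => (starRingEnd ℂ) x.2 := hconj.comp measurable_snd
    simp only [hf, Function.uncurry_def, Acayley]
    fun_prop
  have hGm : Measurable G := by
    simp only [hG]; fun_prop
  have hGint : ∫⁻ ζ in R, G ζ ∂μ ≤ ENNReal.ofReal (Ct * Cm * δ ^ (-α)) := by
    have e : ∀ ζ, G ζ = ENNReal.ofReal Ct * ENNReal.ofReal ((1 - ‖ζ‖) ^ ((s : ℝ) + 1) *
        (1 - r * ‖ζ‖) ^ (1 / p - ((s : ℝ) + 1))) := fun ζ => ENNReal.ofReal_mul hCt0.le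
    simp only [e]
    rw [lintegral_const_mul _ (by fun_prop), mul_assoc, ENNReal.ofReal_mul hCt0.le]
    gcongr
    exact hCm r (by linarith) hr1
  have hmink : ∫⁻ θ in Set.Ioc (0 : ℝ) (2 * Real.pi), (∫⁻ ζ in R, f θ ζ ∂μ) ^ p ≤
      (∫⁻ ζ in R, G ζ ∂μ) ^ p := by
    apply mink_aux _ _ hp f hfm G hGm
    · filter_upwards [ae_restrict_mem hRm] with ζ hζ
      have h1 : 0 < 1 - ‖ζ‖ := by linarith [hζ.2]
      have h2 : 0 < 1 - r * ‖ζ‖ := by nlinarith [norm_nonneg ζ]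
      rw [hG, Ne, ENNReal.ofReal_eq_zero, not_le]
      positivity
    · filter_upwards with ζ
      exact ENNReal.ofReal_ne_top
    · filter_upwards [ae_restrict_mem hRm] with ζ hζ
      exact hCt r (by linarith) hr1 ζ hζ.1 hζ.2
  have hupt : ∀ θ : ℝ, ENNReal.ofReal |u ((r : ℂ) * Complex.exp (θ * Complex.I))| ≤
      ENNReal.ofReal L + ∫⁻ ζ in R, f θ ζ ∂μ := by
    intro θ
    have hz := norm_re r θ (by linarith)
    rw [hrep _ (by rw [mem_ball_zero_iff, hz]; exact hr1), ← hLeq]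
    have h1 := enorm_integral_le_lintegral_enorm (μ := μ.restrict (Metric.ball (0 : ℂ) 1))
      (fun ζ => Real.log ‖weierE (Acayley ((r : ℂ) * Complex.exp (θ * Complex.I)) ζ) s‖)
    simp only [Real.enorm_eq_ofReal_abs] at h1
    refine h1.trans ?_
    have hsub : Metric.ball (0 : ℂ) 1 ⊆ Metric.ball (0 : ℂ) (1 / 2) ∪ R := by
      intro ζ hζ
      rw [mem_ball_zero_iff] at hζ
      rcases lt_or_ge ‖ζ‖ (1 / 2) with h | h
      · left; rwa [mem_ball_zero_iff]
      · right; exact ⟨h, hζ⟩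
    refine (lintegral_mono_set hsub).trans ((lintegral_union_le _ _ _).trans ?_)
    apply add_le_add
    · apply setLIntegral_mono' Metric.isOpen_ball.measurableSet
      intro ζ hζ
      rw [mem_ball_zero_iff] at hζ
      apply ENNReal.ofReal_le_ofReal
      have h2 := hCn _ ζ (by rw [hz]; exact hr34.le) (by rw [hz]; exact hr1) hζ
      have h3 := abs_sub_abs_le_abs_sub (Real.log ‖weierE
          (Acayley ((r : ℂ) * Complex.exp (θ * Complex.I)) ζ) s‖) (Real.log ‖ζ‖)
      linarith
    · apply setLIntegral_mono' hRm
      intro ζ hζ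
      exact ENNReal.ofReal_le_ofReal (hCk _ ζ (by rw [hz]; exact hr1) hζ.1 hζ.2)
  have hδα : 1 ≤ δ ^ (-α) :=
    Real.one_le_rpow_of_pos_of_le_one_of_nonpos hδ0 (by linarith) (by linarith)
  have hlint : ∫⁻ θ in Set.Ioc (0 : ℝ) (2 * Real.pi), ENNReal.ofReal
      (|u ((r : ℂ) * Complex.exp (θ * Complex.I))| ^ p) ≤
      ENNReal.ofReal (B * (δ ^ (-α)) ^ p) := by
    have hJm : Measurable fun θ => ∫⁻ ζ in R, f θ ζ ∂μ := hfm.lintegral_prod_right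
    calc _ ≤ ∫⁻ θ in Set.Ioc (0 : ℝ) (2 * Real.pi),
          2 ^ (p - 1) * (ENNReal.ofReal L ^ p + (∫⁻ ζ in R, f θ ζ ∂μ) ^ p) := by
          apply lintegral_mono
          intro θ
          simp only
          rw [← ENNReal.ofReal_rpow_of_nonneg (abs_nonneg _) hp0.le]
          exact (ENNReal.rpow_le_rpow (hupt θ) hp0.le).trans
            (ENNReal.rpow_add_le_mul_rpow_add_rpow _ _ hp.le)
      _ = 2 ^ (p - 1) * (ENNReal.ofReal L ^ p * ENNReal.ofReal (2 * Real.pi) +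
            ∫⁻ θ in Set.Ioc (0 : ℝ) (2 * Real.pi), (∫⁻ ζ in R, f θ ζ ∂μ) ^ p) := by
          rw [lintegral_const_mul _ (by fun_prop), lintegral_add_left (by fun_prop),
            setLIntegral_const, Real.volume_Ioc, sub_zero]
      _ ≤ 2 ^ (p - 1) * (ENNReal.ofReal L ^ p * ENNReal.ofReal (2 * Real.pi) +
            ENNReal.ofReal (Ct * Cm * δ ^ (-α)) ^ p) := by
          gcongr
          exact hmink.trans (ENNReal.rpow_le_rpow hGint hp0.le)
      _ = ENNReal.ofReal (2 ^ (p - 1) * (L ^ p * (2 * Real.pi) + (Ct * Cm * δ ^ (-α)) ^ p)) := by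
          rw [ENNReal.ofReal_rpow_of_nonneg hL0 hp0.le,
            ENNReal.ofReal_rpow_of_nonneg (by positivity) hp0.le,
            ← ENNReal.ofReal_mul (by positivity), ← ENNReal.ofReal_add (by positivity)
              (by positivity), ENNReal.ofReal_mul (by positivity),
            ← ENNReal.ofReal_rpow_of_pos (by norm_num)]
          simp
      _ ≤ _ := by
          apply ENNReal.ofReal_le_ofReal
          rw [hB, Real.mul_rpow (by positivity) (by positivity), mul_assoc, add_mul]
          have h1 : 1 ≤ (δ ^ (-α)) ^ p := Real.one_le_rpow hδα hp0.le
          have h2 : L ^ p * (2 * Real.pi) ≤ 2 * Real.pi * L ^ p * (δ ^ (-α)) ^ p := by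
            rw [mul_comm]
            exact le_mul_of_one_le_right (by positivity) h1
          gcongr
  have hint : ∫ θ in (0 : ℝ)..(2 * Real.pi),
      |u ((r : ℂ) * Complex.exp (θ * Complex.I))| ^ p ≤ B * (δ ^ (-α)) ^ p := by
    rw [intervalIntegral.integral_of_le (by positivity)]
    refine (le_abs_self _).trans ?_
    have h1 := norm_integral_le_lintegral_norm
      (μ := volume.restrict (Set.Ioc (0 : ℝ) (2 * Real.pi)))
      (fun θ : ℝ => |u ((r : ℂ) * Complex.exp (θ * Complex.I))| ^ p)
    rw [Real.norm_eq_abs] at h1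
    refine h1.trans ?_
    have h2 : ∀ θ : ℝ, ‖|u ((r : ℂ) * Complex.exp (θ * Complex.I))| ^ p‖ =
        |u ((r : ℂ) * Complex.exp (θ * Complex.I))| ^ p := fun θ => by
      rw [Real.norm_eq_abs, abs_of_nonneg (by positivity)]
    simp only [h2]
    exact ENNReal.toReal_le_of_le_ofReal (by positivity) hlint
  rw [mpMean]
  have hnn : 0 ≤ ∫ θ in (0 : ℝ)..(2 * Real.pi),
      |u ((r : ℂ) * Complex.exp (θ * Complex.I))| ^ p :=
    intervalIntegral.integral_nonneg (by positivity) fun θ _ => by positivity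
  calc _ ≤ (1 / (2 * Real.pi) * (B * (δ ^ (-α)) ^ p)) ^ (1 / p) := by
        gcongr
    _ = _ := by
        rw [← mul_assoc, Real.mul_rpow (by positivity) (by positivity),
          ← Real.rpow_mul (by positivity) p, mul_one_div_cancel hp0.ne', Real.rpow_one]
end

section
/- For all z, ζ in the open unit disc 𝔻 with z ≠ ζ one has 0 ≤ K(z,ζ) ≤ (1−|z|²)/|z−ζ|², where K(z,ζ) = (1/(1−|ζ|))·log|(1−z·conj(ζ))/(z−ζ)|. -/
open Complex

/-- The kernel `K(z,ζ) = (1/(1-|ζ|)) · log |(1 - z·conj ζ)/(z - ζ)|`. -/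
noncomputable def Kker (z ζ : ℂ) : ℝ :=
  (1 / (1 - ‖ζ‖)) * Real.log (‖(1 - z * (starRingEnd ℂ) ζ) / (z - ζ)‖)

/-- For `z, ζ` in the open unit disc with `z ≠ ζ`,
`0 ≤ K(z,ζ) ≤ (1-|z|²)/|z-ζ|²`. -/
theorem stmt8 (z ζ : ℂ) (hz : ‖z‖ < 1) (hζ : ‖ζ‖ < 1) (hne : z ≠ ζ) :
    0 ≤ Kker z ζ ∧ Kker z ζ ≤ (1 - ‖z‖ ^ 2) / ‖z - ζ‖ ^ 2 := by
  have key : ‖1 - z * (starRingEnd ℂ) ζ‖ ^ 2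
      = ‖z - ζ‖ ^ 2 + (1 - ‖z‖ ^ 2) * (1 - ‖ζ‖ ^ 2) := by
    simp only [Complex.sq_norm, Complex.normSq_apply, Complex.sub_re, Complex.sub_im,
      Complex.mul_re, Complex.mul_im, Complex.conj_re, Complex.conj_im, Complex.one_re,
      Complex.one_im]
    ring
  have hd : 0 < ‖z - ζ‖ := norm_pos_iff.mpr (sub_ne_zero.mpr hne)
  have hd2 : 0 < ‖z - ζ‖ ^ 2 := by positivity
  have hz0 := norm_nonneg z
  have hζ0 := norm_nonneg ζ
  have hz2 : 0 < 1 - ‖z‖ ^ 2 := by nlinarith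
  have hζ2 : 0 < 1 - ‖ζ‖ ^ 2 := by nlinarith
  have h1 : 0 < 1 - ‖ζ‖ := by linarith
  have hprod := mul_pos hz2 hζ2
  have hge : ‖z - ζ‖ ≤ ‖1 - z * (starRingEnd ℂ) ζ‖ := by
    refine (sq_le_sq₀ hd.le (norm_nonneg _)).mp ?_
    linarith
  unfold Kker
  rw [norm_div]
  set t := ‖1 - z * (starRingEnd ℂ) ζ‖ / ‖z - ζ‖ with ht
  have ht1 : 1 ≤ t := by rw [ht, le_div_iff₀ hd]; linarith
  refine ⟨mul_nonneg (by positivity) (Real.log_nonneg ht1), ?_⟩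
  have hlog : 2 * Real.log t ≤ t ^ 2 - 1 := by
    have h := Real.log_le_sub_one_of_pos (show 0 < t ^ 2 by positivity)
    rw [Real.log_pow] at h
    exact_mod_cast h
  have ht2 : t ^ 2 - 1 = (1 - ‖z‖ ^ 2) / ‖z - ζ‖ ^ 2 * (1 - ‖ζ‖ ^ 2) := by
    rw [ht, div_pow, key]
    field_simp
    ring
  have hQ : 0 < (1 - ‖z‖ ^ 2) / ‖z - ζ‖ ^ 2 := div_pos hz2 hd2
  rw [one_div, inv_mul_le_iff₀ h1]
  rw [ht2] at hlog
  nlinarith [mul_pos hQ h1, mul_pos (mul_pos hQ h1) h1]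
end

section
/- Let D be a compact subset of the open unit disc 𝔻. Then, uniformly in z ∈ D and θ ∈ [0,2π], K(z, ρe^{iθ}) → (1−|z|²)/|e^{iθ}−z|² as ρ ↑ 1; that is, sup_{z∈D, θ∈[0,2π]} |K(z, ρe^{iθ}) − (1−|z|²)/|e^{iθ}−z|²| → 0 as ρ → 1⁻. -/
open Complex

lemma aux_bound (s ρ X C c : ℝ) (hs0 : 0 ≤ s) (hs : s ≤ 1) (hρ : ρ < 1) (hc : 0 < c)
    (hX : c ≤ X) (hC : c ≤ C) (hC4 : C ≤ 4) (h : |X - C| ≤ 4 * (1 - ρ)) :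
    |s * (1 + ρ) / (2 * X) - s / C| ≤ 6 * (1 - ρ) / c ^ 2 := by
  have hX0 : 0 < X := by linarith
  have hC0 : 0 < C := by linarith
  have e : s * (1 + ρ) / (2 * X) - s / C = s * ((1 + ρ) * C - 2 * X) / (2 * X * C) := by
    field_simp
  rw [e, abs_div, abs_mul, abs_of_nonneg hs0, abs_of_pos (by positivity : 0 < 2 * X * C)]
  have h1 : |(1 + ρ) * C - 2 * X| ≤ 12 * (1 - ρ) := by
    rw [abs_le] at h ⊢
    constructor <;> nlinarith
  have h2 : c ^ 2 ≤ X * C := by nlinarith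
  have h3 : s * |(1 + ρ) * C - 2 * X| ≤ 12 * (1 - ρ) := by
    nlinarith [abs_nonneg ((1 + ρ) * C - 2 * X)]
  calc _ ≤ 12 * (1 - ρ) / (2 * X * C) := by gcongr
    _ ≤ 12 * (1 - ρ) / (2 * c ^ 2) := by
      apply div_le_div_of_nonneg_left <;> first | positivity | nlinarith
    _ = _ := by field_simp; ring

lemma sq_diff (a b d : ℝ) (ha0 : 0 ≤ a) (hb0 : 0 ≤ b) (ha : a ≤ 2) (hb : b ≤ 2)
    (h : |a - b| ≤ d) : |a ^ 2 - b ^ 2| ≤ 4 * d := by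
  have e : a ^ 2 - b ^ 2 = (a - b) * (a + b) := by ring
  rw [e, abs_mul, abs_of_nonneg (by linarith : 0 ≤ a + b)]
  nlinarith [abs_nonneg (a - b)]

lemma key_id (z e : ℂ) (ρ : ℝ) (he : ‖e‖ = 1) :
    ‖1 - z * (starRingEnd ℂ) ((ρ : ℂ) * e)‖ ^ 2 - ‖z - ρ * e‖ ^ 2
      = (1 - ‖z‖ ^ 2) * (1 - ρ ^ 2) := by
  have h : e.re ^ 2 + e.im ^ 2 = 1 := by
    have := Complex.sq_norm e
    rw [he, Complex.normSq_apply] at this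
    linarith
  simp only [Complex.sq_norm, Complex.normSq_apply]
  simp
  linear_combination (ρ ^ 2 * (z.re ^ 2 + z.im ^ 2) - ρ ^ 2) * h

set_option maxHeartbeats 2000000 in
/-- For a compact subset `D` of the open unit disc,
`K(z, ρ·e^{iθ}) → (1-|z|²)/|e^{iθ}-z|²` as `ρ ↑ 1`, uniformly in `z ∈ D`
and `θ ∈ [0, 2π]`. -/
theorem stmt9 (D : Set ℂ) (hD : IsCompact D) (hDsub : D ⊆ Metric.ball (0 : ℂ) 1) :
    ∀ ε > 0, ∃ ρ₀ : ℝ, ρ₀ < 1 ∧ ∀ ρ : ℝ, ρ₀ < ρ → ρ < 1 →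
      ∀ z ∈ D, ∀ θ ∈ Set.Icc (0 : ℝ) (2 * Real.pi),
        |Kker z ((ρ : ℂ) * Complex.exp (θ * Complex.I)) -
          (1 - ‖z‖ ^ 2) / ‖Complex.exp (θ * Complex.I) - z‖ ^ 2| < ε := by
  intro ε hε
  obtain ⟨r, hr0, hr1, hr⟩ : ∃ r : ℝ, 0 ≤ r ∧ r < 1 ∧ ∀ z ∈ D, ‖z‖ ≤ r := by
    rcases D.eq_empty_or_nonempty with rfl | hne
    · exact ⟨0, le_rfl, one_pos, by simp⟩
    · obtain ⟨w, hw, hmax⟩ := hD.exists_isMaxOn hne continuous_norm.continuousOn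
      exact ⟨‖w‖, norm_nonneg _, by simpa using hDsub hw, fun z hz => hmax hz⟩
  obtain ⟨c, hc⟩ : ∃ c, c = ((1 - r) / 2) ^ 2 := ⟨_, rfl⟩
  have hc0 : 0 < c := by rw [hc]; have : 0 < 1 - r := by linarith
                         positivity
  refine ⟨max ((1 + r) / 2) (1 - ε * c ^ 2 / 6), max_lt (by linarith) ?_, ?_⟩
  · have : 0 < ε * c ^ 2 / 6 := by positivity
    linarith
  intro ρ hρ hρ1 z hz θ _
  obtain ⟨hρa, hρb⟩ := max_lt_iff.1 hρ
  have hzr := hr z hz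
  have hρ0 : 0 < ρ := by linarith
  have he : ‖Complex.exp (θ * Complex.I)‖ = 1 := Complex.norm_exp_ofReal_mul_I θ
  generalize Complex.exp (θ * Complex.I) = e at he ⊢
  have hnρ : ‖(ρ : ℂ)‖ = ρ := by simp [abs_of_pos hρ0]
  have hnζ : ‖(ρ : ℂ) * e‖ = ρ := by rw [norm_mul, hnρ, he, mul_one]
  have hid := key_id z e ρ he
  have hz0 := norm_nonneg z
  have hee : e * (starRingEnd ℂ) e = 1 := by rw [Complex.mul_conj, Complex.normSq_eq_norm_sq, he]; simp
  -- bounds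
  have hnzc : ‖z * (starRingEnd ℂ) ((ρ : ℂ) * e)‖ = ‖z‖ * ρ := by
    rw [norm_mul, RCLike.norm_conj, hnζ]
  have hn1 : ‖(1 : ℂ)‖ = 1 := norm_one
  have a1 := norm_sub_le (1 : ℂ) (z * (starRingEnd ℂ) ((ρ : ℂ) * e))
  have a2 := norm_sub_norm_le (1 : ℂ) (z * (starRingEnd ℂ) ((ρ : ℂ) * e))
  have b1 := norm_sub_le z (ρ * e)
  have b2 := norm_sub_norm_le (ρ * e) z
  rw [norm_sub_rev] at b2
  have c1 := norm_sub_le e z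
  have c2 := norm_sub_norm_le e z
  have d1 : |‖z - ρ * e‖ - ‖e - z‖| ≤ 1 - ρ := by
    rw [norm_sub_rev e z]
    refine (abs_norm_sub_norm_le _ _).trans ?_
    have : z - ρ * e - (z - e) = ((1 - ρ : ℝ) : ℂ) * e := by push_cast; ring
    rw [this, norm_mul, he, Complex.norm_real, Real.norm_eq_abs, abs_of_pos (by linarith)]
    linarith
  have d2 : |‖1 - z * (starRingEnd ℂ) ((ρ : ℂ) * e)‖ - ‖e - z‖| ≤ 1 - ρ := by
    have h1 : ‖e - z‖ = ‖1 - z * (starRingEnd ℂ) e‖ := by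
      have : 1 - z * (starRingEnd ℂ) e = (e - z) * (starRingEnd ℂ) e := by
        rw [sub_mul, hee]
      rw [this, norm_mul, RCLike.norm_conj, he, mul_one]
    rw [h1]
    refine (abs_norm_sub_norm_le _ _).trans ?_
    have : 1 - z * (starRingEnd ℂ) ((ρ : ℂ) * e) - (1 - z * (starRingEnd ℂ) e)
        = ((1 - ρ : ℝ) : ℂ) * (z * (starRingEnd ℂ) e) := by
      simp; ring
    rw [this, norm_mul, norm_mul, RCLike.norm_conj, he, Complex.norm_real, Real.norm_eq_abs,
      abs_of_pos (by linarith)]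
    nlinarith
  rw [hnzc, hn1] at a1 a2
  rw [hnζ] at b1 b2
  rw [he] at c1 c2
  unfold Kker
  rw [hnζ, norm_div]
  generalize ‖1 - z * (starRingEnd ℂ) ((ρ : ℂ) * e)‖ = a at *
  generalize ‖z - ρ * e‖ = b at *
  generalize ‖e - z‖ = g at *
  generalize ‖z‖ = t at *
  have ha : (1 - r) / 2 ≤ a := by nlinarith
  have hb : (1 - r) / 2 ≤ b := by linarith
  have hg : (1 - r) / 2 ≤ g := by linarith
  have hq : 0 < (1 - r) / 2 := by linarith
  have ha2 : a ≤ 2 := by nlinarith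
  have hb2 : b ≤ 2 := by linarith
  have hg2 : g ≤ 2 := by linarith
  have ha0 : 0 < a := by linarith
  have hb0 : 0 < b := by linarith
  have hg0 : 0 < g := by linarith
  have hs0 : 0 ≤ 1 - t ^ 2 := by nlinarith
  have hs1 : 1 - t ^ 2 ≤ 1 := by nlinarith
  have hca : c ≤ a ^ 2 := by rw [hc]; gcongr
  have hcb : c ≤ b ^ 2 := by rw [hc]; gcongr
  have hcg : c ≤ g ^ 2 := by rw [hc]; gcongr
  have hg4 : g ^ 2 ≤ 4 := by nlinarith
  have BA := aux_bound (1 - t ^ 2) ρ (a ^ 2) (g ^ 2) c hs0 hs1 hρ1 hc0 hca hcg hg4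
    (sq_diff a g _ ha0.le hg0.le ha2 hg2 d2)
  have BB := aux_bound (1 - t ^ 2) ρ (b ^ 2) (g ^ 2) c hs0 hs1 hρ1 hc0 hcb hcg hg4
    (sq_diff b g _ hb0.le hg0.le hb2 hg2 d1)
  have hfin : 6 * (1 - ρ) / c ^ 2 < ε := by
    rw [div_lt_iff₀ (by positivity)]; linarith
  have hlog : Real.log (a / b) = Real.log (a ^ 2 / b ^ 2) / 2 := by
    rw [← div_pow, Real.log_pow]; push_cast; ring
  have hpos : 0 < a ^ 2 / b ^ 2 := by positivity
  have U := Real.log_le_sub_one_of_pos hpos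
  have L := Real.one_sub_inv_le_log_of_pos hpos
  have hδ : 0 < 1 - ρ := by linarith
  have U' : 1 / (1 - ρ) * Real.log (a / b) ≤ (1 - t ^ 2) * (1 + ρ) / (2 * b ^ 2) := by
    have e1 : (1 - t ^ 2) * (1 + ρ) / (2 * b ^ 2) = 1 / (1 - ρ) * ((a ^ 2 / b ^ 2 - 1) / 2) := by
      field_simp
      linear_combination -hid
    rw [e1, hlog]; gcongr
  have L' : (1 - t ^ 2) * (1 + ρ) / (2 * a ^ 2) ≤ 1 / (1 - ρ) * Real.log (a / b) := by
    have e1 : (1 - t ^ 2) * (1 + ρ) / (2 * a ^ 2)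
        = 1 / (1 - ρ) * ((1 - (a ^ 2 / b ^ 2)⁻¹) / 2) := by
      field_simp
      linear_combination -hid
    rw [e1, hlog]; gcongr
  rw [abs_le] at BA BB
  rw [abs_lt]
  constructor <;> linarith [BA.1, BB.2]
end

section
/- For all z, ζ in the open unit disc 𝔻 with z ≠ ζ and 1−|ζ| ≤ (1/2)(1−|z|), one has K(z,ζ) ≥ (1/12)·(1−|z|²)/|z−ζ|², where K(z,ζ) = (1/(1−|ζ|))·log|(1−z·conj(ζ))/(z−ζ)|. -/
open Complex

/-- For `z, ζ` in the open unit disc with `z ≠ ζ` and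
`1-|ζ| ≤ (1/2)(1-|z|)`, one has `K(z,ζ) ≥ (1/12)·(1-|z|²)/|z-ζ|²`. -/
theorem stmt10 (z ζ : ℂ) (hz : ‖z‖ < 1) (hζ : ‖ζ‖ < 1) (hne : z ≠ ζ)
    (hclose : 1 - ‖ζ‖ ≤ (1 / 2) * (1 - ‖z‖)) :
    (1 / 12) * (1 - ‖z‖ ^ 2) / ‖z - ζ‖ ^ 2 ≤ Kker z ζ := by
  have hD0 : 0 < ‖z - ζ‖ := norm_pos_iff.mpr (sub_ne_zero.mpr hne)
  have hid : ‖1 - z * (starRingEnd ℂ) ζ‖ ^ 2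
      = ‖z - ζ‖ ^ 2 + (1 - ‖z‖ ^ 2) * (1 - ‖ζ‖ ^ 2) := by
    simp only [← Complex.normSq_eq_norm_sq, Complex.normSq_apply, Complex.sub_re, Complex.sub_im,
      Complex.mul_re, Complex.mul_im, Complex.conj_re, Complex.conj_im, Complex.one_re,
      Complex.one_im]
    ring
  have htri : ‖ζ‖ - ‖z‖ ≤ ‖z - ζ‖ := by
    rw [norm_sub_rev]; exact norm_sub_norm_le ζ z
  have ha := norm_nonneg z
  have hlog : Real.log ‖(1 - z * (starRingEnd ℂ) ζ) / (z - ζ)‖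
      = (1 / 2) * Real.log (‖1 - z * (starRingEnd ℂ) ζ‖ ^ 2 / ‖z - ζ‖ ^ 2) := by
    rw [norm_div, ← div_pow, Real.log_pow]
    push_cast
    ring
  unfold Kker
  rw [hlog, hid]
  generalize ‖z - ζ‖ = d at *
  generalize ‖z‖ = a at *
  generalize ‖ζ‖ = b at *
  have hb : 1 / 2 ≤ b := by linarith
  have hA : 0 < 1 - a ^ 2 := by nlinarith
  have hB : 0 < 1 - b ^ 2 := by nlinarith
  have hP : 0 < (1 - a ^ 2) * (1 - b ^ 2) := mul_pos hA hB
  have hd2 : 0 < d ^ 2 := by positivity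
  have hP8 : (1 - a ^ 2) * (1 - b ^ 2) ≤ 8 * d ^ 2 := by
    have h1 : (1 - a) * (1 - b) ≤ (2 * d) * d :=
      mul_le_mul (by linarith) (by linarith) (by linarith) (by linarith)
    have h2 : (1 + a) * (1 + b) ≤ 2 * 2 :=
      mul_le_mul (by linarith) (by linarith) (by linarith) (by linarith)
    have h3 : ((1 - a) * (1 - b)) * ((1 + a) * (1 + b)) ≤ ((2 * d) * d) * (2 * 2) :=
      mul_le_mul h1 h2 (mul_nonneg (by linarith) (by linarith)) (by positivity)
    nlinarith
  have hl := Real.one_sub_inv_le_log_of_pos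
    (show 0 < (d ^ 2 + (1 - a ^ 2) * (1 - b ^ 2)) / d ^ 2 by positivity)
  have hb1 : 0 < 1 - b := by linarith
  refine le_trans ?_ (mul_le_mul_of_nonneg_left
    (mul_le_mul_of_nonneg_left hl (by norm_num : (0 : ℝ) ≤ 1 / 2)) (by positivity))
  have hs : 0 < d ^ 2 + (1 - a ^ 2) * (1 - b ^ 2) := by linarith
  have he : 1 / (1 - b) * (1 / 2 * (1 - ((d ^ 2 + (1 - a ^ 2) * (1 - b ^ 2)) / d ^ 2)⁻¹))
      = (1 / 2) * (1 - a ^ 2) * (1 + b) / (d ^ 2 + (1 - a ^ 2) * (1 - b ^ 2)) := by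
    rw [inv_div, one_sub_div hs.ne', eq_div_iff hs.ne']
    field_simp
    ring
  rw [he, div_le_div_iff₀ hd2 hs]
  have h9 : d ^ 2 + (1 - a ^ 2) * (1 - b ^ 2) ≤ 6 * (1 + b) * d ^ 2 := by nlinarith
  have := mul_le_mul_of_nonneg_left h9 hA.le
  linarith
end

section
/- Let s be a nonnegative integer and let D be a compact subset of the open unit disc 𝔻. Then, uniformly in z ∈ D and θ ∈ [0,2π], K_s(z, ρe^{iθ}) → (2^{s+1}/(s+1))·Re(1/(1−z e^{−iθ})^{s+1}) as ρ ↑ 1; that is, sup_{z∈D, θ∈[0,2π]} |K_s(z, ρe^{iθ}) − (2^{s+1}/(s+1))·Re((1−z e^{−iθ})^{−(s+1)})| → 0 as ρ → 1⁻. -/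
open Complex

/-- The kernel `K_s(z,ζ) = -log|E(A(z,ζ),s)| / (1-|ζ|)^{s+1}`. -/
noncomputable def Ks (s : ℕ) (z ζ : ℂ) : ℝ :=
  -Real.log ‖weierE (Acayley z ζ) s‖ / (1 - ‖ζ‖) ^ (s + 1)

/-- The pseudohyperbolic disc `D*(z,σ) = {ζ : |(z-ζ)/(1-z·conj ζ)| < σ}`. -/
noncomputable def pseudoDisc (z : ℂ) (σ : ℝ) : Set ℂ :=
  {ζ : ℂ | ‖(z - ζ) / (1 - z * (starRingEnd ℂ) ζ)‖ < σ}

lemma powdiff (x y : ℂ) (M : ℝ) (hx : ‖x‖ ≤ M) (hy : ‖y‖ ≤ M) (n : ℕ) :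
    ‖x ^ (n + 1) - y ^ (n + 1)‖ ≤ (n + 1) * M ^ n * ‖x - y‖ := by
  have hM : 0 ≤ M := (norm_nonneg x).trans hx
  induction n with
  | zero => simp
  | succ n ih =>
    have h : x ^ (n + 1 + 1) - y ^ (n + 1 + 1) =
        x * (x ^ (n + 1) - y ^ (n + 1)) + (x - y) * y ^ (n + 1) := by ring
    rw [h]
    have h1 : ‖x‖ * ‖x ^ (n + 1) - y ^ (n + 1)‖ ≤ M * ((n + 1) * M ^ n * ‖x - y‖) :=
      mul_le_mul hx ih (norm_nonneg _) hM
    have h2 : ‖x - y‖ * ‖y‖ ^ (n + 1) ≤ ‖x - y‖ * M ^ (n + 1) := by gcongr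
    calc _ ≤ ‖x‖ * ‖x ^ (n + 1) - y ^ (n + 1)‖ + ‖x - y‖ * ‖y‖ ^ (n + 1) := by
          refine (norm_add_le _ _).trans ?_
          rw [norm_mul, norm_mul, norm_pow]
      _ ≤ _ := (add_le_add h1 h2).trans (le_of_eq (by push_cast; ring))

lemma taylor_neg (w : ℂ) (s : ℕ) :
    logTaylor (s + 1) (-w) = -∑ j ∈ Finset.range s, w ^ (j + 1) / (j + 1) := by
  induction s with
  | zero => simp [logTaylor_succ, logTaylor_zero]
  | succ n ih =>
    rw [logTaylor_succ, Pi.add_apply, ih, Finset.sum_range_succ]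
    have : (-1 : ℂ) ^ (n + 1 + 1) * (-w) ^ (n + 1) = - w ^ (n + 1) := by
      rw [← neg_one_mul w, mul_pow, ← mul_assoc, ← pow_add,
        show n + 1 + 1 + (n + 1) = 2 * (n + 1) + 1 by ring, pow_succ, pow_mul]
      simp
    rw [this]
    push_cast
    ring

lemma logE (w : ℂ) (s : ℕ) (hw : ‖w‖ ≤ 1 / 2) :
    |-Real.log ‖weierE w s‖ - (w ^ (s + 1)).re / (s + 1)| ≤ 2 * ‖w‖ ^ (s + 2) := by
  have hw1 : ‖-w‖ < 1 := by rw [norm_neg]; linarith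
  have hne : 1 - w ≠ 0 := by
    intro h
    have : w = 1 := (sub_eq_zero.mp h).symm
    rw [this] at hw; norm_num at hw
  have h := norm_log_sub_logTaylor_le (s + 1) hw1
  rw [taylor_neg, Finset.sum_range_succ, norm_neg, ← sub_eq_add_neg] at h
  have hE : Real.log ‖weierE w s‖ =
      (log (1 - w) + ∑ j ∈ Finset.range s, w ^ (j + 1) / (j + 1)).re := by
    rw [weierE, norm_mul, Real.log_mul (by simpa using hne) (by simp), norm_exp, Real.log_exp,
      add_re, log_re]
  have h3 : (w ^ (s + 1)).re / (s + 1) = (w ^ (s + 1) / ((s : ℂ) + 1)).re := by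
    have : ((s : ℂ) + 1) = ((s + 1 : ℝ) : ℂ) := by push_cast; ring
    rw [this, div_ofReal_re]
  rw [hE, h3, ← abs_neg]
  have h4 := (abs_re_le_norm _).trans h
  refine le_trans (le_of_eq ?_) (h4.trans ?_)
  · congr 1
    simp only [add_re, sub_re, neg_re]
    ring
  · have h5 : (1 - ‖w‖)⁻¹ ≤ 2 := by
      rw [inv_le_comm₀ (by linarith) (by norm_num)]; linarith
    have h6 : (0 : ℝ) ≤ ‖w‖ ^ (s + 2) := by positivity
    rw [div_le_iff₀ (by positivity)]
    calc ‖w‖ ^ (s + 1 + 1) * (1 - ‖w‖)⁻¹ ≤ ‖w‖ ^ (s + 2) * 2 := by gcongr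
      _ ≤ _ := by
        push_cast
        have : (0 : ℝ) ≤ s := by positivity
        nlinarith [mul_nonneg h6 this]

lemma key (s : ℕ) (c : ℝ) (hc : 0 < c) (z : ℂ) (hz : ‖z‖ ≤ 1 - c) (ρ θ : ℝ) (h0 : 0 < ρ)
    (h1 : ρ < 1) (hs : 2 / c * (1 - ρ) ≤ 1 / 2) :
    |Ks s z ((ρ : ℂ) * Complex.exp (θ * Complex.I)) -
          (2 ^ (s + 1) / (s + 1 : ℝ)) *
            (1 / (1 - z * Complex.exp (-θ * Complex.I)) ^ (s + 1)).re|
      ≤ (2 * (2 / c) ^ (s + 2) + (2 / c) ^ s * (2 / c ^ 2)) * (1 - ρ) := by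
  have hu : ‖Complex.exp (-θ * Complex.I)‖ = 1 := by
    have := norm_exp_ofReal_mul_I (-θ)
    push_cast at this; exact this
  have hn : ‖(ρ : ℂ) * Complex.exp (θ * Complex.I)‖ = ρ := by
    rw [norm_mul, norm_exp_ofReal_mul_I, norm_real, Real.norm_of_nonneg h0.le, mul_one]
  have hcj : (starRingEnd ℂ) ((ρ : ℂ) * Complex.exp (θ * Complex.I)) =
      ρ * Complex.exp (-θ * Complex.I) := by
    rw [map_mul, ← exp_conj, map_mul, conj_ofReal, conj_ofReal, conj_I]; congr 2; ring
  rw [Ks, hn, Acayley, hn, hcj]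
  generalize Complex.exp (-θ * Complex.I) = u at hu
  set δ := 1 - ρ with hδ
  have hδ0 : 0 < δ := by rw [hδ]; linarith
  have lower : ∀ v : ℂ, ‖v‖ ≤ 1 → c ≤ ‖1 - z * v‖ := fun v hv => by
    have := norm_sub_norm_le 1 (z * v)
    rw [norm_one, norm_mul] at this
    nlinarith [norm_nonneg z, norm_nonneg v]
  have hb : c ≤ ‖1 - z * (ρ * u)‖ := lower _ (by
    rw [norm_mul, hu, norm_real, Real.norm_of_nonneg h0.le]; linarith)
  have hb1 : c ≤ ‖1 - z * u‖ := lower _ hu.le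
  have hzu : ‖1 + z * u‖ ≤ 2 := by
    refine (norm_add_le _ _).trans ?_
    rw [norm_mul, hu, norm_one]; linarith
  have hbe : 1 - z * (ρ * u) ≠ 0 := norm_pos_iff.mp (hc.trans_le hb)
  have hbe1 : 1 - z * u ≠ 0 := norm_pos_iff.mp (hc.trans_le hb1)
  set x : ℂ := (1 + ρ) / (1 - z * (ρ * u)) with hx
  set y : ℂ := 2 / (1 - z * u) with hy
  have hxn : ‖x‖ ≤ 2 / c := by
    rw [hx, norm_div]
    have : ‖(1 + ρ : ℂ)‖ ≤ 2 := by
      refine (norm_add_le _ _).trans ?_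
      rw [norm_one, norm_real, Real.norm_of_nonneg h0.le]; linarith
    gcongr
  have hyn : ‖y‖ ≤ 2 / c := by
    rw [hy, norm_div, Complex.norm_two]; gcongr
  have hxy : ‖x - y‖ ≤ 2 / c ^ 2 * δ := by
    have e : x - y = -(δ : ℂ) * (1 + z * u) / ((1 - z * (ρ * u)) * (1 - z * u)) := by
      rw [hx, hy, div_sub_div _ _ hbe hbe1, hδ]
      congr 1; push_cast; ring
    rw [e, norm_div, norm_mul, norm_neg, norm_real, Real.norm_of_nonneg hδ0.le, norm_mul]
    calc _ ≤ δ * 2 / (c * c) := by gcongr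
      _ = _ := by ring
  have hw : ((1 : ℂ) - (ρ : ℂ) ^ 2) / (1 - z * (ρ * u)) = δ * x := by
    rw [hx, hδ]; push_cast; ring
  have hyr : 2 ^ (s + 1) / (s + 1 : ℝ) * (1 / (1 - z * u) ^ (s + 1)).re
      = (y ^ (s + 1)).re / (s + 1) := by
    have : y ^ (s + 1) = ((2 ^ (s + 1) : ℝ) : ℂ) * (1 / (1 - z * u) ^ (s + 1)) := by
      rw [hy, div_pow]; push_cast; ring
    rw [this, re_ofReal_mul]; ring
  rw [hw, hyr]
  have hwn : ‖(δ : ℂ) * x‖ ≤ 2 / c * δ := by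
    rw [norm_mul, norm_real, Real.norm_of_nonneg hδ0.le, mul_comm]; gcongr
  have hL := logE (δ * x) s (hwn.trans hs)
  have hre : (((δ : ℂ) * x) ^ (s + 1)).re = δ ^ (s + 1) * (x ^ (s + 1)).re := by
    rw [mul_pow, ← ofReal_pow, re_ofReal_mul]
  rw [hre] at hL
  set L := -Real.log ‖weierE (δ * x) s‖
  have hL2 : |L / δ ^ (s + 1) - (x ^ (s + 1)).re / (s + 1)| ≤ 2 * (2 / c) ^ (s + 2) * δ := by
    have e : L / δ ^ (s + 1) - (x ^ (s + 1)).re / (s + 1) =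
        (L - δ ^ (s + 1) * (x ^ (s + 1)).re / (s + 1)) / δ ^ (s + 1) := by
      field_simp
    rw [e, abs_div, abs_of_pos (pow_pos hδ0 _), div_le_iff₀ (pow_pos hδ0 _)]
    calc _ ≤ 2 * ‖(δ : ℂ) * x‖ ^ (s + 2) := hL
      _ ≤ 2 * (2 / c * δ) ^ (s + 2) := by gcongr
      _ = _ := by rw [mul_pow]; ring
  have hP : |(x ^ (s + 1)).re / (s + 1) - (y ^ (s + 1)).re / (s + 1)|
      ≤ (2 / c) ^ s * (2 / c ^ 2) * δ := by
    have hs0 : (0 : ℝ) < s + 1 := by positivity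
    rw [← sub_div, ← sub_re, abs_div, abs_of_pos hs0, div_le_iff₀ hs0]
    calc _ ≤ _ := (abs_re_le_norm _).trans (powdiff x y _ hxn hyn s)
      _ ≤ (s + 1) * (2 / c) ^ s * (2 / c ^ 2 * δ) := by gcongr
      _ = _ := by ring
  calc _ ≤ _ := abs_sub_le _ ((x ^ (s + 1)).re / (s + 1)) _
    _ ≤ _ := add_le_add hL2 hP
    _ = _ := by ring

/-- For a compact subset `D` of the open unit disc,
`K_s(z, ρ·e^{iθ}) → (2^{s+1}/(s+1))·Re(1/(1-z·e^{-iθ})^{s+1})` as `ρ ↑ 1`,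
uniformly in `z ∈ D` and `θ ∈ [0, 2π]`. -/
theorem stmt13 (s : ℕ) (D : Set ℂ) (hD : IsCompact D) (hDsub : D ⊆ Metric.ball (0 : ℂ) 1) :
    ∀ ε > 0, ∃ ρ₀ : ℝ, ρ₀ < 1 ∧ ∀ ρ : ℝ, ρ₀ < ρ → ρ < 1 →
      ∀ z ∈ D, ∀ θ ∈ Set.Icc (0 : ℝ) (2 * Real.pi),
        |Ks s z ((ρ : ℂ) * Complex.exp (θ * Complex.I)) -
          (2 ^ (s + 1) / (s + 1 : ℝ)) *
            (1 / (1 - z * Complex.exp (-θ * Complex.I)) ^ (s + 1)).re| < ε := by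
  intro ε hε
  obtain ⟨c, hc, hcD⟩ : ∃ c : ℝ, 0 < c ∧ ∀ z ∈ D, ‖z‖ ≤ 1 - c := by
    rcases D.eq_empty_or_nonempty with h | h
    · exact ⟨1, one_pos, by simp [h]⟩
    · obtain ⟨z0, hz0, hmax⟩ := hD.exists_isMaxOn h continuous_norm.continuousOn
      have := hDsub hz0
      rw [mem_ball_zero_iff] at this
      refine ⟨1 - ‖z0‖, by linarith, fun z hz => ?_⟩
      have := hmax hz
      simp only [Set.mem_ofPred_eq] at this
      linarith
  set C := 2 * (2 / c) ^ (s + 2) + (2 / c) ^ s * (2 / c ^ 2) with hC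
  have hC0 : 0 < C := by positivity
  refine ⟨max 0 (max (1 - c / 4) (1 - ε / C)), ?_, fun ρ hρ hρ1 z hz θ _ => ?_⟩
  · have : 0 < ε / C := by positivity
    refine max_lt one_pos (max_lt ?_ ?_) <;> linarith
  · rw [max_lt_iff, max_lt_iff] at hρ
    obtain ⟨h0, h2, h3⟩ := hρ
    refine (key s c hc z (hcD z hz) ρ θ h0 hρ1 ?_).trans_lt ?_
    · rw [div_mul_eq_mul_div, div_le_iff₀ hc]; linarith
    · have : 1 - ρ < ε / C := by linarith
      rw [lt_div_iff₀ hC0] at this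
      rw [← hC]; linarith
end

section
/- Let s be a nonnegative integer. For all z ∈ 𝔻 and ζ ∈ closure(𝔻) with |A(z,ζ)| < 1/2, one has |log|E(A(z,ζ),s)|| ≤ 2·|A(z,ζ)|^{s+1}/(s+1), and consequently |K_s(z,ζ)| ≤ (2^{s+2}/(s+1))·(1/|1−z·conj(ζ)|^{s+1}). -/
open Complex

theorem aux_log (s : ℕ) (w : ℂ) (hw : ‖w‖ < 1 / 2) :
    |Real.log ‖weierE w s‖| ≤ 2 * ‖w‖ ^ (s + 1) / (s + 1) := by
  have hw1 : ‖-w‖ < 1 := by rw [norm_neg]; linarith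
  have h := Complex.norm_log_sub_logTaylor_le s hw1
  have hT : Complex.logTaylor (s + 1) (-w)
      = -∑ j ∈ Finset.range s, w ^ (j + 1) / ((j : ℂ) + 1) := by
    rw [Complex.logTaylor, Finset.sum_range_succ', ← Finset.sum_neg_distrib]
    simp only [Nat.cast_zero, div_zero, add_zero]
    refine Finset.sum_congr rfl fun j _ => ?_
    have : (-1 : ℂ) ^ (j + 1 + 1) * (-w) ^ (j + 1) = -w ^ (j + 1) := by
      rw [neg_pow w, pow_succ (-1 : ℂ) (j + 1)]
      have h2 : (-1 : ℂ) ^ (j + 1) * (-1) ^ (j + 1) = 1 := by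
        rw [← mul_pow]; simp
      linear_combination (-w ^ (j + 1)) * h2
    rw [this]
    push_cast
    ring
  have hne : (1 : ℂ) - w ≠ 0 := by
    intro h0
    have : w = 1 := by linear_combination -h0
    rw [this] at hw
    norm_num at hw
  have hE : Real.log ‖weierE w s‖
      = (Complex.log (1 + -w) - Complex.logTaylor (s + 1) (-w)).re := by
    rw [hT, weierE, norm_mul, Complex.norm_exp,
      Real.log_mul (norm_ne_zero_iff.mpr hne) (Real.exp_ne_zero _), Real.log_exp,
      sub_neg_eq_add, Complex.add_re, Complex.log_re, ← sub_eq_add_neg]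
  rw [hE]
  refine (Complex.abs_re_le_norm _).trans (h.trans ?_)
  rw [norm_neg]
  have h3 : (1 - ‖w‖)⁻¹ ≤ 2 := by
    rw [inv_le_comm₀ (by linarith) (by norm_num)]
    linarith
  rw [mul_comm (2 : ℝ)]
  gcongr

/-- For `z ∈ 𝔻`, `ζ ∈ closure 𝔻` with `|A(z,ζ)| < 1/2`:
`|log|E(A(z,ζ),s)|| ≤ 2·|A(z,ζ)|^{s+1}/(s+1)` and consequently
`|K_s(z,ζ)| ≤ (2^{s+2}/(s+1))·(1/|1-z·conj ζ|^{s+1})`. -/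
theorem stmt14 (s : ℕ) (z ζ : ℂ) (hz : ‖z‖ < 1) (hζ : ‖ζ‖ ≤ 1)
    (hA : ‖Acayley z ζ‖ < 1 / 2) :
    |Real.log ‖weierE (Acayley z ζ) s‖| ≤
        2 * ‖Acayley z ζ‖ ^ (s + 1) / (s + 1) ∧
      |Ks s z ζ| ≤ (2 ^ (s + 2) / (s + 1 : ℝ)) *
        (1 / ‖1 - z * (starRingEnd ℂ) ζ‖ ^ (s + 1)) := by
  have h1 := aux_log s (Acayley z ζ) hA
  refine ⟨h1, ?_⟩
  have hR : 0 ≤ (2 ^ (s + 2) / (s + 1 : ℝ)) *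
        (1 / ‖1 - z * (starRingEnd ℂ) ζ‖ ^ (s + 1)) := by positivity
  rcases eq_or_lt_of_le hζ with h0 | h0
  · simpa [Ks, h0] using hR
  have hp : 0 < (1 - ‖ζ‖) ^ (s + 1) := pow_pos (by linarith) _
  rw [Ks, abs_div, abs_neg, abs_of_pos hp, div_le_iff₀ hp]
  refine h1.trans ?_
  have hn : ‖Acayley z ζ‖ ≤ 2 * (1 - ‖ζ‖) / ‖1 - z * (starRingEnd ℂ) ζ‖ := by
    rw [Acayley, norm_div]
    have h4 : ‖(1 : ℂ) - (‖ζ‖ : ℂ) ^ 2‖ = 1 - ‖ζ‖ ^ 2 := by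
      have : (1 : ℂ) - (‖ζ‖ : ℂ) ^ 2 = ((1 - ‖ζ‖ ^ 2 : ℝ) : ℂ) := by push_cast; rfl
      rw [this, Complex.norm_real, Real.norm_of_nonneg]
      nlinarith [norm_nonneg ζ]
    rw [h4]
    gcongr
    nlinarith [norm_nonneg ζ]
  calc 2 * ‖Acayley z ζ‖ ^ (s + 1) / ((s : ℝ) + 1)
      ≤ 2 * (2 * (1 - ‖ζ‖) / ‖1 - z * (starRingEnd ℂ) ζ‖) ^ (s + 1) / ((s : ℝ) + 1) := by
        gcongr
    _ = _ := by
        rw [div_pow, mul_pow]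
        ring
end

section
/- There is an absolute constant c > 0 (one may take c = 1/(3(π²/4+1))) with the following property: for every finite positive Borel measure λ on the closed unit disc, every r ∈ [0,1) and every φ ∈ ℝ, one has ∫_{C(φ,(1−r)/2)} K(re^{iφ}, ζ) dλ(ζ) ≥ c · λ(C(φ,(1−r)/2))/(1−r), where K(z,ζ) = (1/(1−|ζ|))·log|(1−z·conj(ζ))/(z−ζ)| for ζ ∈ 𝔻 and K(z, e^{iθ}) = (1−|z|²)/|e^{iθ}−z|² for boundary points. -/
open MeasureTheory Complex

/-- The Carleson box `C(φ,δ) = {ζ ∈ closure 𝔻 : |ζ| ≥ 1-δ, |arg ζ - φ| ≤ πδ}`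
(the angular condition is expressed via a representative `θ` of the argument,
so that it is `2π`-periodic in `φ`). -/
noncomputable def carlesonBox (φ δ : ℝ) : Set ℂ :=
  {ζ : ℂ | ‖ζ‖ ≤ 1 ∧ 1 - δ ≤ ‖ζ‖ ∧
    ∃ θ : ℝ, |θ - φ| ≤ Real.pi * δ ∧
      ζ = (‖ζ‖ : ℂ) * Complex.exp (θ * Complex.I)}

/-- The kernel `K(z,ζ) = (1/(1-|ζ|))·log|(1-z·conj ζ)/(z-ζ)|` for `ζ ∈ 𝔻`,
extended to the boundary by `K(z,ζ) = (1-|z|²)/|ζ-z|²` for `|ζ| ≥ 1`. -/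
noncomputable def KkerExt (z ζ : ℂ) : ℝ :=
  if ‖ζ‖ < 1 then
    (1 / (1 - ‖ζ‖)) * Real.log (‖(1 - z * (starRingEnd ℂ) ζ) / (z - ζ)‖)
  else (1 - ‖z‖ ^ 2) / ‖ζ - z‖ ^ 2

lemma box_facts (r φ : ℝ) (h0 : 0 ≤ r) (h1 : r < 1) (ζ : ℂ)
    (hζ : ζ ∈ carlesonBox φ ((1 - r) / 2)) :
    ‖ζ‖ ≤ 1 ∧ (1 + r) / 2 ≤ ‖ζ‖ ∧ (1 - r) / 2 ≤ ‖ζ - (r : ℂ) * Complex.exp (φ * Complex.I)‖ ∧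
    ‖ζ - (r : ℂ) * Complex.exp (φ * Complex.I)‖ ≤ 3 * (1 - r) := by
  obtain ⟨ha, hb, θ, hθ, he⟩ := hζ
  have hnz : ‖(r : ℂ) * Complex.exp (φ * Complex.I)‖ = r := by
    rw [norm_mul, Complex.norm_exp_ofReal_mul_I, Complex.norm_real, Real.norm_of_nonneg h0, mul_one]
  refine ⟨ha, by linarith, ?_, ?_⟩
  · have := norm_sub_norm_le ζ ((r : ℂ) * Complex.exp (φ * Complex.I))
    rw [hnz] at this
    linarith
  · set ρ := ‖ζ‖ with hρ
    have hE : ζ - (r : ℂ) * Complex.exp (φ * Complex.I) =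
        ((ρ : ℂ) * Complex.exp (φ * Complex.I)) *
          (Complex.exp (Complex.I * ((θ - φ : ℝ) : ℂ)) - 1) +
        ((ρ - r : ℝ) : ℂ) * Complex.exp (φ * Complex.I) := by
      have : Complex.exp (φ * Complex.I) * Complex.exp (Complex.I * ((θ - φ : ℝ) : ℂ))
          = Complex.exp (θ * Complex.I) := by
        rw [← Complex.exp_add]; congr 1; push_cast; ring
      rw [mul_sub, mul_assoc, this, ← he]; push_cast; ring
    rw [hE]
    have hx := Real.norm_exp_I_mul_ofReal_sub_one_le (x := θ - φ)
    rw [Real.norm_eq_abs] at hx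
    have hpi : Real.pi * ((1 - r) / 2) ≤ 2 * (1 - r) := by
      nlinarith [Real.pi_le_four]
    have hρ0 : 0 ≤ ρ := norm_nonneg _
    have e1 : ‖((ρ : ℂ) * Complex.exp (φ * Complex.I))‖ = ρ := by
      rw [norm_mul, Complex.norm_exp_ofReal_mul_I, Complex.norm_real, Real.norm_of_nonneg hρ0,
        mul_one]
    have e2 : ‖((ρ - r : ℝ) : ℂ) * Complex.exp (φ * Complex.I)‖ = ρ - r := by
      rw [norm_mul, Complex.norm_exp_ofReal_mul_I, Complex.norm_real,
        Real.norm_of_nonneg (by linarith), mul_one]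
    refine (norm_add_le _ _).trans ?_
    rw [norm_mul, e1, e2]
    have := mul_le_mul ha hx (norm_nonneg _) zero_le_one
    linarith

lemma norm_identity (z ζ : ℂ) :
    ‖1 - z * (starRingEnd ℂ) ζ‖ ^ 2 = ‖ζ - z‖ ^ 2 + (1 - ‖z‖ ^ 2) * (1 - ‖ζ‖ ^ 2) := by
  simp only [← Complex.normSq_eq_norm_sq, Complex.normSq_apply]
  simp
  ring

lemma ker_bounds (r : ℝ) (h0 : 0 ≤ r) (h1 : r < 1) (z ζ : ℂ) (hz : ‖z‖ = r)
    (ha : ‖ζ‖ ≤ 1) (hb : (1 + r) / 2 ≤ ‖ζ‖) (hc : (1 - r) / 2 ≤ ‖ζ - z‖)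
    (hd : ‖ζ - z‖ ≤ 3 * (1 - r)) :
    1 / 22 / (1 - r) ≤ KkerExt z ζ ∧ KkerExt z ζ ≤ (1 - r ^ 2) / ((1 - r) / 2) ^ 2 := by
  have hs : 0 < 1 - r := by linarith
  have hN2 : ‖ζ - z‖ ^ 2 ≤ 9 * (1 - r) ^ 2 := by
    have := pow_le_pow_left₀ (norm_nonneg _) hd 2
    nlinarith
  have hN2' : ((1 - r) / 2) ^ 2 ≤ ‖ζ - z‖ ^ 2 := pow_le_pow_left₀ (by linarith) hc 2
  have hpos : 0 < ((1 - r) / 2) ^ 2 := by positivity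
  have hid := norm_identity z ζ
  rw [KkerExt, hz]
  rw [hz] at hid
  have hr2 : 0 ≤ 1 - r ^ 2 := by nlinarith
  split_ifs with hlt
  · rw [norm_div, norm_sub_rev z ζ]
    set ρ := ‖ζ‖
    set A := ‖1 - z * (starRingEnd ℂ) ζ‖ with hA
    set D := ‖ζ - z‖
    have hD : 0 < D := by linarith
    have hP : 0 < (1 - r ^ 2) * (1 - ρ ^ 2) := mul_pos (by nlinarith) (by nlinarith)
    have hA2 : 0 < A ^ 2 := by rw [hid]; positivity
    have hA0 : 0 < A := by
      rcases (norm_nonneg (1 - z * (starRingEnd ℂ) ζ)).lt_or_eq with h | h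
      · exact h
      · rw [hA, ← h] at hA2; simp at hA2
    have hlog : Real.log (A / D) = 1 / 2 * Real.log (A ^ 2 / D ^ 2) := by
      rw [← div_pow, Real.log_pow]; push_cast; ring
    have hy : 0 < A ^ 2 / D ^ 2 := by positivity
    have hlo := Real.one_sub_inv_le_log_of_pos hy
    have hup := Real.log_le_sub_one_of_pos hy
    rw [hlog]
    have hρ : 0 < 1 - ρ := by linarith
    constructor
    · have e : 1 - (A ^ 2 / D ^ 2)⁻¹ = (1 - r ^ 2) * (1 - ρ ^ 2) / A ^ 2 := by
        rw [inv_div, eq_div_iff hA2.ne', sub_mul, div_mul_cancel₀ _ hA2.ne']; linarith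
      rw [e] at hlo
      have hA11 : A ^ 2 ≤ 11 * (1 - r) ^ 2 := by
        rw [hid]
        have : (1 - r ^ 2) * (1 - ρ ^ 2) ≤ (2 * (1 - r)) * (1 - r) :=
          mul_le_mul (by nlinarith) (by nlinarith) (by nlinarith) (by linarith)
        nlinarith
      calc 1 / 22 / (1 - r) = 1 / (1 - ρ) * (1 / 2 * ((1 - r) * (1 - ρ) / (11 * (1 - r) ^ 2))) := by
            field_simp; norm_num
        _ ≤ 1 / (1 - ρ) * (1 / 2 * ((1 - r ^ 2) * (1 - ρ ^ 2) / A ^ 2)) := by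
            have : (1 - r) * (1 - ρ) ≤ (1 - r ^ 2) * (1 - ρ ^ 2) :=
              mul_le_mul (by nlinarith) (by nlinarith) hρ.le hr2
            gcongr
        _ ≤ _ := by gcongr
    · have e : A ^ 2 / D ^ 2 - 1 = (1 - r ^ 2) * (1 - ρ ^ 2) / D ^ 2 := by
        rw [hid]; field_simp; ring
      rw [e] at hup
      calc 1 / (1 - ρ) * (1 / 2 * Real.log (A ^ 2 / D ^ 2))
          ≤ 1 / (1 - ρ) * (1 / 2 * ((1 - r ^ 2) * (1 - ρ ^ 2) / D ^ 2)) := by gcongr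
        _ = (1 - r ^ 2) * ((1 + ρ) / 2) / D ^ 2 := by field_simp; ring
        _ ≤ (1 - r ^ 2) * 1 / D ^ 2 := by gcongr; linarith
        _ ≤ _ := by rw [mul_one]; gcongr
  · constructor
    · calc 1 / 22 / (1 - r) ≤ 1 / 9 / (1 - r) := by gcongr; norm_num
        _ = (1 - r) / (9 * (1 - r) ^ 2) := by field_simp
        _ ≤ _ := by
            have : 1 - r ≤ 1 - r ^ 2 := by nlinarith
            have : 0 < ‖ζ - z‖ ^ 2 := by linarith
            gcongr
    · gcongr

lemma box_compact (φ δ : ℝ) (hδ : δ ≤ 1) : IsCompact (carlesonBox φ δ) := by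
  have : carlesonBox φ δ = (fun p : ℝ × ℝ => (p.1 : ℂ) * Complex.exp (p.2 * Complex.I)) ''
      (Set.Icc (1 - δ) 1 ×ˢ Set.Icc (φ - Real.pi * δ) (φ + Real.pi * δ)) := by
    ext ζ
    constructor
    · rintro ⟨ha, hb, θ, hθ, he⟩
      rw [abs_le] at hθ
      exact ⟨(‖ζ‖, θ), ⟨⟨hb, ha⟩, ⟨by linarith [hθ.1], by linarith [hθ.2]⟩⟩, he.symm⟩
    · rintro ⟨⟨ρ, θ⟩, ⟨⟨h1, h2⟩, ⟨h3, h4⟩⟩, rfl⟩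
      dsimp only at *
      have hn : ‖(ρ : ℂ) * Complex.exp (θ * Complex.I)‖ = ρ := by
        rw [norm_mul, Complex.norm_exp_ofReal_mul_I, Complex.norm_real,
          Real.norm_of_nonneg (by linarith), mul_one]
      refine ⟨by rw [hn]; exact h2, by rw [hn]; exact h1, θ, ?_, by rw [hn]⟩
      rw [abs_le]; constructor <;> linarith
  rw [this]
  exact (isCompact_Icc.prod isCompact_Icc).image (by fun_prop)

lemma ker_measurable (z : ℂ) : Measurable (KkerExt z) := by
  unfold KkerExt
  refine Measurable.ite (measurableSet_lt measurable_norm measurable_const) ?_ ?_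
  · have : Measurable (starRingEnd ℂ : ℂ → ℂ) := Complex.continuous_conj.measurable
    fun_prop
  · fun_prop

/-- There is an absolute constant `c > 0` such that for every finite
positive Borel measure `λ` on the closed unit disc, every `r ∈ [0,1)` and `φ ∈ ℝ`,
`∫_{C(φ,(1-r)/2)} K(re^{iφ},ζ) dλ(ζ) ≥ c·λ(C(φ,(1-r)/2))/(1-r)`. -/
theorem stmt16 :
    ∃ c : ℝ, 0 < c ∧ ∀ (lam : Measure ℂ), IsFiniteMeasure lam →
      lam (Metric.closedBall (0 : ℂ) 1)ᶜ = 0 →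
      ∀ r : ℝ, 0 ≤ r → r < 1 → ∀ φ : ℝ,
        c * (lam (carlesonBox φ ((1 - r) / 2))).toReal / (1 - r) ≤
          ∫ ζ in carlesonBox φ ((1 - r) / 2),
            KkerExt ((r : ℂ) * Complex.exp (φ * Complex.I)) ζ ∂lam := by
  refine ⟨1 / 22, by norm_num, ?_⟩
  intro lam hfin _ r h0 h1 φ
  have hnz : ‖(r : ℂ) * Complex.exp (φ * Complex.I)‖ = r := by
    rw [norm_mul, Complex.norm_exp_ofReal_mul_I, Complex.norm_real, Real.norm_of_nonneg h0, mul_one]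
  have hm := (box_compact φ ((1 - r) / 2) (by linarith)).measurableSet
  have hB : ∀ ζ ∈ carlesonBox φ ((1 - r) / 2), _ := fun ζ hζ => by
    obtain ⟨a, b, c, d⟩ := box_facts r φ h0 h1 ζ hζ
    exact ker_bounds r h0 h1 _ ζ hnz a b c d
  have hs : 0 < 1 - r := by linarith
  have hint : IntegrableOn (KkerExt ((r : ℂ) * Complex.exp (φ * Complex.I)))
      (carlesonBox φ ((1 - r) / 2)) lam := by
    refine IntegrableOn.of_bound (measure_lt_top _ _) (ker_measurable _).aestronglyMeasurable
      ((1 - r ^ 2) / ((1 - r) / 2) ^ 2) ?_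
    filter_upwards [ae_restrict_mem hm] with ζ hζ
    rw [Real.norm_of_nonneg (le_trans (by positivity) (hB ζ hζ).1)]
    exact (hB ζ hζ).2
  have := setIntegral_mono_on (integrableOn_const (C := 1 / 22 / (1 - r))
    (measure_ne_top lam (carlesonBox φ ((1 - r) / 2)))) hint hm (fun ζ hζ => (hB ζ hζ).1)
  rw [setIntegral_const, smul_eq_mul, Measure.real] at this
  refine le_trans (le_of_eq ?_) this
  ring
end
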